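/- arXiv:2404.02777 — 3 statements merged into one kernel-verified Lean document; each statement's English description precedes it below -/
import Mathlib

section
/- Every nilpotent square matrix over a field is the sum of an idempotent matrix and a torsion matrix. -/
/-!
The argument takes place in an arbitrary ring. Think of `f` as a nilpotent endomorphism of a
module `V` with `f ^ (k + 1) = 0`. If `W` is a complement of `ker (f ^ k)`, then
`W ⊕ f W ⊕ ⋯ ⊕ f ^ k W` is a direct summand of `V` invariant under `f`, and a suitable complement
is invariant too and killed by `f ^ k`; so induction on `k` splits `V` into such blocks.
The splitting only needs an inner inverse of each power of `f`.

On one block let `e` be the projection that sends `f ^ k w` to `w + f w + ⋯ + f ^ k w` and kills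
`f ^ i w` for `i < k`. Then `t = f - e` runs through the cycle
`w ↦ f w ↦ ⋯ ↦ f ^ k w ↦ -(w + f w + ⋯ + f ^ k w) ↦ w`, hence `t ^ (k + 2) = 1`.
-/

open Finset Subsemigroup

section Corner

variable {R : Type*}

theorem mul_eq_zero_of_mem_corner [SemigroupWithZero R] {p q x y : R} (hpq : p * q = 0)
    (hx : x ∈ corner p) (hy : y ∈ corner q) : x * y = 0 := by
  obtain ⟨r, rfl⟩ := hx
  obtain ⟨s, rfl⟩ := hy
  calc p * r * p * (q * s * q) = p * r * (p * q) * s * q := by simp only [mul_assoc]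
    _ = 0 := by simp only [hpq, mul_zero, zero_mul]

theorem add_mem_corner_add [NonUnitalSemiring R] {p q x y : R} (hp : IsIdempotentElem p)
    (hq : IsIdempotentElem q) (hpq : p * q = 0) (hqp : q * p = 0) (hx : x ∈ corner p)
    (hy : y ∈ corner q) : x + y ∈ corner (p + q) := by
  have hp' : p ∈ corner p := (mem_corner_iff hp).2 ⟨hp.eq, hp.eq⟩
  have hq' : q ∈ corner q := (mem_corner_iff hq).2 ⟨hq.eq, hq.eq⟩
  refine (mem_corner_iff (hp.add hq (by rw [hpq, hqp, add_zero]))).2 ⟨?_, ?_⟩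
  · rw [add_mul, mul_add, mul_add, ((mem_corner_iff hp).1 hx).1, ((mem_corner_iff hq).1 hy).1,
      mul_eq_zero_of_mem_corner hpq hp' hy, mul_eq_zero_of_mem_corner hqp hq' hx, add_zero,
      zero_add]
  · rw [mul_add, add_mul, add_mul, ((mem_corner_iff hp).1 hx).2, ((mem_corner_iff hq).1 hy).2,
      mul_eq_zero_of_mem_corner hpq hx hq', mul_eq_zero_of_mem_corner hqp hy hp', add_zero,
      zero_add]

theorem add_pow_of_mul_eq_zero [Semiring R] {x y : R} (hxy : x * y = 0) (hyx : y * x = 0) {n : ℕ}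
    (hn : 1 ≤ n) : (x + y) ^ n = x ^ n + y ^ n := by
  induction n, hn using Nat.le_induction with
  | base => simp only [pow_one]
  | succ n hn ih =>
    obtain ⟨m, rfl⟩ := Nat.exists_eq_add_of_le' hn
    have hx : x ^ (m + 1) * y = 0 := by rw [pow_succ, mul_assoc, hxy, mul_zero]
    have hy : y ^ (m + 1) * x = 0 := by rw [pow_succ, mul_assoc, hyx, mul_zero]
    rw [pow_succ, ih, add_mul, mul_add, mul_add, hx, hy, add_zero, zero_add, ← pow_succ,
      ← pow_succ]

/-- `x` is the sum of an idempotent and a torsion element of the corner ring `p R p`, whose unit is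
the idempotent `p`. Stating this inside `R` lets decompositions in different corners be added. -/
def IsIdempotentAddTorsionIn [Semiring R] (p x : R) : Prop :=
  ∃ e ∈ corner p, ∃ t ∈ corner p, IsIdempotentElem e ∧ (∃ s : ℕ, 1 ≤ s ∧ t ^ s = p) ∧ x = e + t

theorem IsIdempotentAddTorsionIn.add [Semiring R] {p q x y : R} (hp : IsIdempotentElem p)
    (hq : IsIdempotentElem q) (hpq : p * q = 0) (hqp : q * p = 0)
    (hx : IsIdempotentAddTorsionIn p x) (hy : IsIdempotentAddTorsionIn q y) :
    IsIdempotentAddTorsionIn (p + q) (x + y) := by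
  obtain ⟨e, hep, t, htp, he, ⟨m, hm, htm⟩, rfl⟩ := hx
  obtain ⟨e', heq, t', htq, he', ⟨n, hn, htn⟩, rfl⟩ := hy
  refine ⟨e + e', add_mem_corner_add hp hq hpq hqp hep heq,
    t + t', add_mem_corner_add hp hq hpq hqp htp htq, he.add he' ?_,
    ⟨m * n, Nat.mul_pos hm hn, ?_⟩, add_add_add_comm e t e' t'⟩
  · rw [mul_eq_zero_of_mem_corner hpq hep heq, mul_eq_zero_of_mem_corner hqp heq hep, add_zero]
  · rw [add_pow_of_mul_eq_zero (mul_eq_zero_of_mem_corner hpq htp htq)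
      (mul_eq_zero_of_mem_corner hqp htq htp) (Nat.mul_pos hm hn), pow_mul, htm,
      hp.pow_eq (by lia), pow_mul', htn, hq.pow_eq (by lia)]

end Corner

section Block

variable {R : Type*} [Ring R] {f a : R} {k m : ℕ}

/-- For `m = 0` this says that the elements `f ^ i * a * f ^ (k - j)` with `i, j ≤ k` multiply like
the matrix units `E i j`; thus `a` is the corner unit `E 0 k`, and `f` acts on the block as the
shift `∑ E (i + 1) i`. A positive `m` describes the intermediate stages of the elimination that
constructs such an `a`. -/
structure IsCornerMatrixUnit (f a : R) (k m : ℕ) : Prop where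
  mul_pow_mul_eq_zero : ∀ i, m ≤ i → i < k → a * f ^ i * a = 0
  mul_pow_mul_self : a * f ^ k * a = a
  mul_pow_succ : a * f ^ (k + 1) = 0
  pow_succ_mul : f ^ (k + 1) * a = 0

/-- The unit of the block of `a`, namely the sum of the diagonal matrix units. -/
def blockUnit (f a : R) (k : ℕ) : R := ∑ i ∈ range (k + 1), f ^ i * a * f ^ (k - i)

/-- The idempotent summand of a single block, namely the sum of the matrix units of the last
column. -/
def blockIdempotent (f a : R) (k : ℕ) : R := (∑ i ∈ range (k + 1), f ^ i) * a

/-- The torsion summand of a single block. -/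
def blockTorsion (f a : R) (k : ℕ) : R := f * blockUnit f a k - blockIdempotent f a k

namespace IsCornerMatrixUnit

theorem mul_pow_eq_zero (h : IsCornerMatrixUnit f a k m) {i : ℕ} (hi : k < i) :
    a * f ^ i = 0 := by
  obtain ⟨d, rfl⟩ := Nat.exists_eq_add_of_lt hi
  rw [show k + d + 1 = k + 1 + d by lia, pow_add, ← mul_assoc, h.mul_pow_succ, zero_mul]

theorem mul_pow_mul (h : IsCornerMatrixUnit f a k m) {i : ℕ} (hi : m ≤ i) :
    a * f ^ i * a = if i = k then a else 0 := by
  rcases lt_trichotomy i k with hik | rfl | hik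
  · rw [if_neg hik.ne, h.mul_pow_mul_eq_zero i hi hik]
  · rw [if_pos rfl, h.mul_pow_mul_self]
  · rw [if_neg hik.ne', h.mul_pow_eq_zero hik, zero_mul]

theorem eliminate (h : IsCornerMatrixUnit f a k (m + 1)) (hm : m < k) :
    IsCornerMatrixUnit f (a - a * f ^ m * a * f ^ (k - m)) k m := by
  have product (i : ℕ) : (a - a * f ^ m * a * f ^ (k - m)) * f ^ i *
      (a - a * f ^ m * a * f ^ (k - m)) =
      (a * f ^ i * a - a * f ^ m * (a * f ^ (k - m + i) * a)) * (1 - f ^ m * a * f ^ (k - m)) := by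
    rw [pow_add]
    noncomm_ring
  refine ⟨fun i hi hik ↦ ?_, ?_, ?_, ?_⟩
  · obtain rfl | hi := hi.eq_or_lt
    · rw [product, Nat.sub_add_cancel hm.le, h.mul_pow_mul_self, sub_self, zero_mul]
    · rw [product, h.mul_pow_mul_eq_zero i hi hik,
        h.mul_pow_eq_zero (show k < k - m + i by lia)]
      simp only [zero_mul, mul_zero, sub_self]
  · rw [product, h.mul_pow_mul_self, h.mul_pow_eq_zero (show k < k - m + k by lia), zero_mul,
      mul_zero, sub_zero, mul_sub, mul_one]
    simp only [mul_assoc]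
  · rw [sub_mul, h.mul_pow_succ, mul_assoc _ (f ^ (k - m)), ← pow_add, mul_assoc _ a,
      h.mul_pow_eq_zero (show k < k - m + (k + 1) by lia), mul_zero, sub_zero]
  · simp only [mul_sub, ← mul_assoc, h.pow_succ_mul, zero_mul, sub_zero]

theorem commute_blockUnit (h : IsCornerMatrixUnit f a k m) : Commute f (blockUnit f a k) := by
  have shift_left : f * blockUnit f a k = ∑ i ∈ range k, f ^ (i + 1) * a * f ^ (k - i) := by
    simp only [blockUnit, mul_sum, ← mul_assoc, ← pow_succ']
    rw [sum_range_succ, h.pow_succ_mul, zero_mul, add_zero]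
  have shift_right : blockUnit f a k * f = ∑ i ∈ range k, f ^ (i + 1) * a * f ^ (k - i) := by
    simp only [blockUnit, sum_mul, mul_assoc, ← pow_succ]
    rw [sum_range_succ', Nat.sub_zero, h.mul_pow_succ, mul_zero, add_zero]
    refine sum_congr rfl fun i hi ↦ ?_
    rw [show k - (i + 1) + 1 = k - i by grind]
  exact shift_left.trans shift_right.symm

theorem blockUnit_mul (h : IsCornerMatrixUnit f a k 0) : blockUnit f a k * a = a := by
  have term (i : ℕ) (hi : i ≠ 0) (hik : i ∈ range (k + 1)) : f ^ i * a * f ^ (k - i) * a = 0 := by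
    rw [mul_assoc (f ^ i), mul_assoc (f ^ i), h.mul_pow_mul (Nat.zero_le _), if_neg (by grind),
      mul_zero]
  rw [blockUnit, sum_mul, sum_eq_single_of_mem 0 (by simp) fun i hik hi ↦ term i hi hik, pow_zero,
    one_mul, Nat.sub_zero, h.mul_pow_mul_self]

theorem mul_blockUnit (h : IsCornerMatrixUnit f a k 0) : a * blockUnit f a k = a := by
  have term (i : ℕ) : a * (f ^ i * a * f ^ (k - i)) = (if i = k then a else 0) * f ^ (k - i) := by
    rw [← h.mul_pow_mul (Nat.zero_le i)]
    simp only [mul_assoc]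
  simp only [blockUnit, mul_sum, term]
  rw [sum_eq_single_of_mem k (by simp) fun i _ hi ↦ by rw [if_neg hi, zero_mul], if_pos rfl,
    Nat.sub_self, pow_zero, mul_one]

theorem isIdempotentElem_blockUnit (h : IsCornerMatrixUnit f a k 0) :
    IsIdempotentElem (blockUnit f a k) := by
  have fixed (i : ℕ) : blockUnit f a k * (f ^ i * a * f ^ (k - i)) = f ^ i * a * f ^ (k - i) := by
    rw [← mul_assoc, ← mul_assoc, ← (h.commute_blockUnit.pow_left i).eq, mul_assoc (f ^ i),
      h.blockUnit_mul]
  calc blockUnit f a k * blockUnit f a k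
      = ∑ i ∈ range (k + 1), blockUnit f a k * (f ^ i * a * f ^ (k - i)) := mul_sum ..
    _ = blockUnit f a k := by simp only [fixed]; rfl

theorem mul_blockIdempotent (h : IsCornerMatrixUnit f a k 0) : a * blockIdempotent f a k = a := by
  rw [blockIdempotent, ← mul_assoc, mul_sum, sum_mul]
  simp [h.mul_pow_mul]

theorem isIdempotentElem_blockIdempotent (h : IsCornerMatrixUnit f a k 0) :
    IsIdempotentElem (blockIdempotent f a k) := by
  rw [IsIdempotentElem]
  nth_rw 1 [blockIdempotent]
  rw [mul_assoc, h.mul_blockIdempotent, blockIdempotent]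

theorem one_sub_mul_blockIdempotent (h : IsCornerMatrixUnit f a k m) :
    (1 - f) * blockIdempotent f a k = a := by
  rw [blockIdempotent, ← mul_assoc, mul_neg_geom_sum, sub_mul, one_mul, h.pow_succ_mul, sub_zero]

theorem blockUnit_mul_blockIdempotent (h : IsCornerMatrixUnit f a k 0) :
    blockUnit f a k * blockIdempotent f a k = blockIdempotent f a k := by
  have hcomm : Commute (blockUnit f a k) (∑ i ∈ range (k + 1), f ^ i) :=
    Commute.sum_right _ _ _ fun i _ ↦ (h.commute_blockUnit.pow_left i).symm
  rw [blockIdempotent, ← mul_assoc, hcomm.eq, mul_assoc, h.blockUnit_mul]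

theorem blockIdempotent_mem_corner (h : IsCornerMatrixUnit f a k 0) :
    blockIdempotent f a k ∈ corner (blockUnit f a k) :=
  (mem_corner_iff h.isIdempotentElem_blockUnit).2
    ⟨h.blockUnit_mul_blockIdempotent, by rw [blockIdempotent, mul_assoc, h.mul_blockUnit]⟩

theorem mul_blockUnit_mem_corner (h : IsCornerMatrixUnit f a k 0) :
    f * blockUnit f a k ∈ corner (blockUnit f a k) := by
  refine (mem_corner_iff h.isIdempotentElem_blockUnit).2 ⟨?_, ?_⟩
  · rw [h.commute_blockUnit.eq, ← mul_assoc, h.isIdempotentElem_blockUnit.eq]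
  · rw [mul_assoc, h.isIdempotentElem_blockUnit.eq]

theorem blockTorsion_mem_corner (h : IsCornerMatrixUnit f a k 0) :
    blockTorsion f a k ∈ corner (blockUnit f a k) :=
  (NonUnitalRing.corner (blockUnit f a k)).sub_mem h.mul_blockUnit_mem_corner
    h.blockIdempotent_mem_corner

theorem blockTorsion_mul_pow_mul (h : IsCornerMatrixUnit f a k 0) (i : ℕ) :
    blockTorsion f a k * (f ^ i * a) =
      f ^ (i + 1) * a - if i = k then blockIdempotent f a k else 0 := by
  have unit_part : f * blockUnit f a k * (f ^ i * a) = f ^ (i + 1) * a := by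
    rw [mul_assoc, ← mul_assoc (blockUnit f a k), ← (h.commute_blockUnit.pow_left i).eq, mul_assoc,
      h.blockUnit_mul, ← mul_assoc, pow_succ']
  have idempotent_part : blockIdempotent f a k * (f ^ i * a) =
      if i = k then blockIdempotent f a k else 0 := by
    rw [blockIdempotent, mul_assoc, ← mul_assoc a, h.mul_pow_mul (Nat.zero_le i), mul_ite, mul_zero]
  rw [blockTorsion, sub_mul, unit_part, idempotent_part]

theorem blockTorsion_pow_mul (h : IsCornerMatrixUnit f a k 0) {i : ℕ} (hi : i ≤ k) :
    blockTorsion f a k ^ i * a = f ^ i * a := by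
  induction i with
  | zero => simp only [pow_zero]
  | succ i ih =>
    rw [pow_succ', mul_assoc, ih (by lia), h.blockTorsion_mul_pow_mul, if_neg (by lia), sub_zero]

theorem blockTorsion_mul_blockIdempotent (h : IsCornerMatrixUnit f a k 0) :
    blockTorsion f a k * blockIdempotent f a k = -a := by
  rw [blockTorsion, sub_mul, mul_assoc, h.blockUnit_mul_blockIdempotent,
    h.isIdempotentElem_blockIdempotent.eq]
  conv_rhs => rw [← h.one_sub_mul_blockIdempotent]
  noncomm_ring

theorem blockTorsion_pow_add_two_mul (h : IsCornerMatrixUnit f a k 0) :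
    blockTorsion f a k ^ (k + 2) * a = a := by
  calc blockTorsion f a k ^ (k + 2) * a
      = blockTorsion f a k * (blockTorsion f a k * (blockTorsion f a k ^ k * a)) := by
        simp only [pow_succ', mul_assoc]
    _ = blockTorsion f a k * -blockIdempotent f a k := by
        rw [h.blockTorsion_pow_mul le_rfl, h.blockTorsion_mul_pow_mul, if_pos rfl, h.pow_succ_mul,
          zero_sub]
    _ = a := by rw [mul_neg, h.blockTorsion_mul_blockIdempotent, neg_neg]

theorem blockTorsion_pow_add_two (h : IsCornerMatrixUnit f a k 0) :
    blockTorsion f a k ^ (k + 2) = blockUnit f a k := by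
  have fixed (i : ℕ) (hi : i ∈ range (k + 1)) :
      blockTorsion f a k ^ (k + 2) * (f ^ i * a * f ^ (k - i)) = f ^ i * a * f ^ (k - i) := by
    rw [← h.blockTorsion_pow_mul (mem_range_succ_iff.1 hi), ← mul_assoc, ← mul_assoc, ← pow_add,
      add_comm, pow_add, mul_assoc (_ ^ i), h.blockTorsion_pow_add_two_mul]
  calc blockTorsion f a k ^ (k + 2) = blockTorsion f a k ^ (k + 2) * blockUnit f a k := by
        rw [pow_succ, mul_assoc,
          ((mem_corner_iff h.isIdempotentElem_blockUnit).1 h.blockTorsion_mem_corner).2]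
    _ = blockUnit f a k := by rw [blockUnit, mul_sum, sum_congr rfl fixed]

theorem isIdempotentAddTorsionIn (h : IsCornerMatrixUnit f a k 0) :
    IsIdempotentAddTorsionIn (blockUnit f a k) (f * blockUnit f a k) :=
  ⟨blockIdempotent f a k, h.blockIdempotent_mem_corner, blockTorsion f a k,
    h.blockTorsion_mem_corner, h.isIdempotentElem_blockIdempotent,
    ⟨k + 2, by lia, h.blockTorsion_pow_add_two⟩, by rw [blockTorsion, add_sub_cancel]⟩

theorem pow_mul_blockUnit (h : IsCornerMatrixUnit f a k m) :
    f ^ k * blockUnit f a k = f ^ k * a * f ^ k := by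
  have term (i : ℕ) (hi : i ≠ 0) : f ^ k * (f ^ i * a * f ^ (k - i)) = 0 := by
    obtain ⟨d, rfl⟩ := Nat.exists_eq_succ_of_ne_zero hi
    rw [← mul_assoc, ← mul_assoc, ← pow_add, show k + (d + 1) = d + (k + 1) by lia, pow_add,
      mul_assoc (f ^ d), h.pow_succ_mul, mul_zero, zero_mul]
  rw [blockUnit, mul_sum, sum_eq_single_of_mem 0 (by simp) fun i _ hi ↦ term i hi, pow_zero,
    one_mul, Nat.sub_zero, mul_assoc]

end IsCornerMatrixUnit

theorem blockUnit_mem_corner {p : R} (hp : IsIdempotentElem p) (hpf : Commute p f)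
    (ha : a ∈ corner p) : blockUnit f a k ∈ corner p := by
  obtain ⟨hpa, hap⟩ := (mem_corner_iff hp).1 ha
  refine (NonUnitalRing.corner p).sum_mem fun i _ ↦ (mem_corner_iff hp).2 ⟨?_, ?_⟩
  · rw [← mul_assoc, ← mul_assoc, (hpf.pow_right i).eq, mul_assoc (f ^ i), hpa]
  · rw [mul_assoc, ← (hpf.pow_right (k - i)).eq, ← mul_assoc, mul_assoc (f ^ i), hap]

theorem exists_mem_corner_pow_mul_mul_pow {p : R} (hp : IsIdempotentElem p) (hpf : Commute p f)
    (hreg : ∃ y, f ^ k * y * f ^ k = f ^ k) : ∃ z ∈ corner p, f ^ k * z * f ^ k = f ^ k * p := by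
  obtain ⟨y, hy⟩ := hreg
  have hpk : Commute p (f ^ k) := hpf.pow_right k
  refine ⟨p * y * p, ⟨y, rfl⟩, ?_⟩
  calc f ^ k * (p * y * p) * f ^ k = f ^ k * p * y * (p * f ^ k) := by simp only [mul_assoc]
    _ = p * (f ^ k * y * f ^ k) * p := by simp only [← mul_assoc, hpk.eq]
    _ = f ^ k * p := by rw [hy, hpk.eq, mul_assoc, hp.eq]

theorem exists_isCornerMatrixUnit_self {p : R} (hp : IsIdempotentElem p) (hpf : Commute p f)
    (hfp : f ^ (k + 1) * p = 0) (hreg : ∃ y, f ^ k * y * f ^ k = f ^ k) :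
    ∃ a ∈ corner p, f ^ k * a * f ^ k = f ^ k * p ∧ IsCornerMatrixUnit f a k k := by
  obtain ⟨z, hz, hzf⟩ := exists_mem_corner_pow_mul_mul_pow hp hpf hreg
  obtain ⟨hpz, hzp⟩ := (mem_corner_iff hp).1 hz
  have hpfk : p * f ^ (k + 1) = 0 := (hpf.pow_right (k + 1)).eq.trans hfp
  have hfz : f ^ k * z * f ^ k * z = f ^ k * z := by rw [hzf, mul_assoc, hpz]
  have hfa : f ^ k * (z * f ^ k * z) = f ^ k * z := by simpa only [mul_assoc] using hfz
  refine ⟨z * f ^ k * z, (mem_corner_iff hp).2 ⟨?_, ?_⟩, by rw [hfa, hzf],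
    fun i hi hik ↦ absurd hik hi.not_gt, ?_, ?_, ?_⟩
  · rw [← mul_assoc, ← mul_assoc, hpz]
  · rw [mul_assoc, hzp]
  · calc z * f ^ k * z * f ^ k * (z * f ^ k * z)
        = z * (f ^ k * z * (f ^ k * (z * f ^ k * z))) := by simp only [mul_assoc]
      _ = z * f ^ k * z := by rw [hfa, ← mul_assoc (f ^ k * z), hfz, mul_assoc]
  · rw [mul_assoc, ← hzp, mul_assoc z p (f ^ (k + 1)), hpfk, mul_zero, mul_zero]
  · rw [← hpz, mul_assoc p, mul_assoc p, ← mul_assoc, hfp, zero_mul]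

theorem exists_isCornerMatrixUnit {p : R} (hp : IsIdempotentElem p) (hpf : Commute p f)
    (hfp : f ^ (k + 1) * p = 0) (hreg : ∃ y, f ^ k * y * f ^ k = f ^ k) (hm : m ≤ k) :
    ∃ a ∈ corner p, f ^ k * a * f ^ k = f ^ k * p ∧ IsCornerMatrixUnit f a k m := by
  induction hm using Nat.decreasingInduction with
  | self => exact exists_isCornerMatrixUnit_self hp hpf hfp hreg
  | of_succ m hm ih =>
    obtain ⟨a, ha, hfa, h⟩ := ih
    obtain ⟨hpa, hap⟩ := (mem_corner_iff hp).1 ha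
    refine ⟨_, (mem_corner_iff hp).2 ⟨?_, ?_⟩, ?_, h.eliminate hm⟩
    · rw [mul_sub, hpa]
      simp only [← mul_assoc, hpa]
    · rw [sub_mul, hap, mul_assoc _ _ p, ← (hpf.pow_right (k - m)).eq, ← mul_assoc,
        mul_assoc _ a p, hap]
    · rw [mul_sub, sub_mul, hfa, mul_assoc (f ^ k), mul_assoc _ (f ^ (k - m)), ← pow_add,
        mul_assoc _ a, h.mul_pow_eq_zero (show k < k - m + k by lia), mul_zero, mul_zero, sub_zero]

theorem isIdempotentAddTorsionIn_mul (hreg : ∀ i, ∃ y, f ^ i * y * f ^ i = f ^ i) {p : R}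
    (hp : IsIdempotentElem p) (hpf : Commute p f) (hfp : f ^ k * p = 0) :
    IsIdempotentAddTorsionIn p (f * p) := by
  induction k generalizing p with
  | zero =>
    obtain rfl : p = 0 := by rwa [pow_zero, one_mul] at hfp
    exact ⟨0, zero_mem (NonUnitalRing.corner 0), 0, zero_mem (NonUnitalRing.corner 0), .zero,
      ⟨1, le_rfl, pow_one 0⟩, by rw [mul_zero, add_zero]⟩
  | succ k ih =>
    obtain ⟨a, ha, hfa, h⟩ := exists_isCornerMatrixUnit hp hpf hfp (hreg k) k.zero_le
    set q := blockUnit f a k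
    have hq : IsIdempotentElem q := h.isIdempotentElem_blockUnit
    obtain ⟨hpq, hqp⟩ := (mem_corner_iff hp).1 (blockUnit_mem_corner hp hpf ha : q ∈ corner p)
    have complement : IsIdempotentAddTorsionIn (p - q) (f * (p - q)) :=
      ih (hq.sub hp hqp hpq) (hpf.sub_left h.commute_blockUnit.symm)
        (by rw [mul_sub, h.pow_mul_blockUnit, hfa, sub_self])
    have total := h.isIdempotentAddTorsionIn.add hq (hq.sub hp hqp hpq)
      (by rw [mul_sub, hqp, hq.eq, sub_self]) (by rw [sub_mul, hpq, hq.eq, sub_self]) complement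
    rwa [← mul_add, add_sub_cancel] at total

end Block

theorem exists_mul_mul_eq_self {R : Type*} [Ring R] [IsSemisimpleRing R] (x : R) :
    ∃ y, x * y * x = x := by
  obtain ⟨e, he, hspan⟩ := IsSemisimpleRing.ideal_eq_span_idempotent (Ideal.span {x})
  obtain ⟨y, hy⟩ := Ideal.mem_span_singleton'.1 (hspan ▸ Ideal.mem_span_singleton_self e)
  obtain ⟨c, hc⟩ := Ideal.mem_span_singleton'.1 (hspan ▸ Ideal.mem_span_singleton_self x)
  exact ⟨y, by rw [mul_assoc, hy, ← hc, mul_assoc, he.eq]⟩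

theorem nilpotent_eq_idempotent_add_torsion_general {R : Type*} [Ring R] {f : R}
    (hf : IsNilpotent f) (hreg : ∀ i, ∃ y, f ^ i * y * f ^ i = f ^ i) :
    ∃ e t : R, IsIdempotentElem e ∧ IsUnit t ∧ (∃ s : ℕ, 1 ≤ s ∧ t ^ s = 1) ∧ f = e + t := by
  obtain ⟨k, hk⟩ := hf
  obtain ⟨e, -, t, -, he, ⟨s, hs, hts⟩, hsum⟩ :=
    isIdempotentAddTorsionIn_mul hreg .one (.one_left f) (show f ^ k * 1 = 0 by rw [hk, zero_mul])
  exact ⟨e, t, he, .of_pow_eq_one hts (by lia), ⟨s, hs, hts⟩, by rw [← hsum, mul_one]⟩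

/-- Every nilpotent square matrix over a field is the sum of an idempotent
matrix and a torsion matrix. -/
theorem nilpotent_eq_idempotent_add_torsion
    {F : Type*} [Field F] {n : ℕ} (A : Matrix (Fin n) (Fin n) F)
    (hA : IsNilpotent A) :
    ∃ E T : Matrix (Fin n) (Fin n) F,
      IsIdempotentElem E ∧ IsUnit T ∧ (∃ s : ℕ, 1 ≤ s ∧ T ^ s = 1) ∧
      A = E + T :=
  nilpotent_eq_idempotent_add_torsion_general hA fun i ↦ exists_mul_mul_eq_self (A ^ i)
end

section
/- Over an algebraically closed field, every periodic matrix A ∈ M_n(F) with rank(A) ≥ n/2 is the sum of a torsion matrix and a square-zero matrix. -/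
/-!
A periodic endomorphism is the direct sum of a torsion endomorphism `B` and a nilpotent one `C`, and
the rank condition says `2 * dim ker C ≤ dim W + dim K`, where `B` acts on `W` and `C` on `K`.

If `2 * dim ker C ≤ dim K`, then `C` is the required sum by itself. A nilpotent Jordan block of size
`n ≥ 2` plus a corner entry `c` is the companion matrix of `X ^ n - c`, which is torsion when `c` is
a root of unity. An invariant plane on which `C` is a Jordan block can be factored out without
destroying the inequality until at most a single block of size three is left. The torsion summands
on the subspace and the quotient glue to a torsion endomorphism because, there being infinitely many
roots of unity, their spectra can be kept disjoint.

Otherwise a subspace of `ker C` of dimension at most `dim W` splits off and leaves the first case.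
Pair it with a `B`-invariant subspace `U` of the same dimension: if `B` acts on `U` as `P`, then
`[[P, 0], [0, 0]] = [[0, -P], [P, P]] + [[P, P], [-P, -P]]`, where the second summand has square
zero and the first has cube `-P ^ 3`. A shear absorbs the off-diagonal part of `B` along `U`.
-/

open Polynomial Module

/-- An element of a ring is the sum of an element of finite multiplicative order and an element of
square zero. -/
def IsTorsionAddSquareZero {R : Type*} [Ring R] (a : R) : Prop :=
  ∃ t n : R, IsOfFinOrder t ∧ n ^ 2 = 0 ∧ a = t + n

/-- A strengthening of `IsTorsionAddSquareZero` that survives extensions: the torsion summand can be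
chosen so that its spectrum avoids the roots of any prescribed polynomial `q ≠ 0`, which is encoded
as invertibility of `q` evaluated at it. -/
def IsFlexiblyTorsionAddSquareZero (F : Type*) {R : Type*} [Field F] [Ring R] [Algebra F R]
    (a : R) : Prop :=
  ∀ q : F[X], q ≠ 0 →
    ∃ t n : R, IsOfFinOrder t ∧ n ^ 2 = 0 ∧ IsUnit (aeval t q) ∧ a = t + n

section Ring

variable {R S : Type*} [Ring R] [Ring S]

theorem IsFlexiblyTorsionAddSquareZero.isTorsionAddSquareZero {F : Type*} [Field F] [Algebra F R]
    {a : R} (ha : IsFlexiblyTorsionAddSquareZero F a) : IsTorsionAddSquareZero a := by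
  obtain ⟨t, n, ht, hn, -, rfl⟩ := ha 1 one_ne_zero
  exact ⟨t, n, ht, hn, rfl⟩

theorem IsTorsionAddSquareZero.map {a : R} (ha : IsTorsionAddSquareZero a) (f : R →+* S) :
    IsTorsionAddSquareZero (f a) := by
  obtain ⟨t, n, ht, hn, rfl⟩ := ha
  exact ⟨f t, f n, f.toMonoidHom.isOfFinOrder ht, by rw [← map_pow, hn, map_zero], map_add f t n⟩

theorem IsTorsionAddSquareZero.prodMk {a : R} {b : S} (ha : IsTorsionAddSquareZero a)
    (hb : IsTorsionAddSquareZero b) : IsTorsionAddSquareZero (a, b) := by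
  obtain ⟨t, n, ht, hn, rfl⟩ := ha
  obtain ⟨t', n', ht', hn', rfl⟩ := hb
  exact ⟨(t, t'), (n, n'), ht.prod_mk ht', Prod.ext hn hn', rfl⟩

theorem isUnit_aeval_of_isCoprime {k : Type*} [CommRing k] [Algebra k R] {p q : k[X]} {a : R}
    (hp : aeval a p = 0) (hpq : IsCoprime p q) : IsUnit (aeval a q) := by
  obtain ⟨r, s, hrs⟩ := hpq
  have hsq : aeval a s * aeval a q = 1 := by simpa [hp] using congrArg (aeval a) hrs
  have hqs : aeval a q * aeval a s = 1 := by rw [← map_mul, mul_comm, map_mul, hsq]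
  exact ⟨⟨_, _, hqs, hsq⟩, rfl⟩

end Ring

section Module

variable {R M M' : Type*} [Ring R] [AddCommGroup M] [Module R M] [AddCommGroup M'] [Module R M']

theorem IsTorsionAddSquareZero.prodMap {f : Module.End R M} {g : Module.End R M'}
    (hf : IsTorsionAddSquareZero f) (hg : IsTorsionAddSquareZero g) :
    IsTorsionAddSquareZero (f.prodMap g : Module.End R (M × M')) :=
  (hf.prodMk hg).map (LinearMap.prodMapRingHom R M M')

theorem IsTorsionAddSquareZero.of_linearEquiv {f : Module.End R M} {g : Module.End R M'}
    (hg : IsTorsionAddSquareZero g) (e : M ≃ₗ[R] M') (h : ∀ x, e (f x) = g (e x)) :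
    IsTorsionAddSquareZero f := by
  have hf : f = e.symm.conjRingEquiv g := LinearMap.ext fun x => by
    simp [LinearEquiv.conjRingEquiv, ← h]
  exact hf ▸ hg.map e.symm.conjRingEquiv.toRingHom

end Module

section RootsOfUnity

variable {F : Type*} [Field F]

theorem infinite_setOf_isOfFinOrder (hF : ∀ j, 0 < j → (X ^ j - 1 : F[X]).Splits) :
    {c : F | IsOfFinOrder c}.Infinite := by
  classical
  have card_le {j : ℕ} (hj : (j : F) ≠ 0) {s : Finset F} (hs : {c : F | IsOfFinOrder c} ⊆ s) :
      j ≤ s.card := by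
    have hpos : 0 < j := Nat.pos_of_ne_zero (by rintro rfl; simp at hj)
    have hsub : (X ^ j - 1 : F[X]).rootSet F ⊆ s := fun c hc => hs <|
      isOfFinOrder_iff_pow_eq_one.2 ⟨j, hpos, by
        simpa [sub_eq_zero] using (mem_rootSet.1 hc).2⟩
    have hcard : Fintype.card ((X ^ j - 1 : F[X]).rootSet F) = j := by
      rw [card_rootSet_eq_natDegree (X_pow_sub_one_separable_iff.2 hj) (by simpa using hF j hpos),
        ← C_1, natDegree_X_pow_sub_C]
    rw [← hcard, ← Nat.card_eq_fintype_card, ← Set.ncard_coe_finset s]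
    exact Set.ncard_le_ncard hsub s.finite_toSet
  intro hfin
  set s := hfin.toFinset
  have hs : {c : F | IsOfFinOrder c} ⊆ s := by simp [s]
  by_cases hj : ((s.card + 1 : ℕ) : F) = 0
  · have := card_le (j := s.card + 2) (by
      push_cast at hj ⊢
      rw [show (s.card + 2 : F) = s.card + 1 + 1 by ring, hj]
      simp) hs
    omega
  · have := card_le hj hs
    omega

theorem finite_setOf_not_isCoprime_X_pow_sub_C {q : F[X]} (hq : q ≠ 0) (n : ℕ) :
    {c : F | ¬ IsCoprime (X ^ n - C c) q}.Finite := by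
  refine (((q.rootSet_finite (AlgebraicClosure F)).image (· ^ n)).preimage
    (algebraMap F (AlgebraicClosure F)).injective.injOn).subset fun c hc => ?_
  obtain ⟨x, hx, hqx⟩ : ∃ x : AlgebraicClosure F, aeval x (X ^ n - C c) = 0 ∧ aeval x q = 0 := by
    simpa [isCoprime_iff_aeval_ne_zero_of_isAlgClosed F (AlgebraicClosure F)] using hc
  exact ⟨x, mem_rootSet.2 ⟨hq, hqx⟩, by simpa [sub_eq_zero] using hx⟩

end RootsOfUnity

section Cyclic

variable {F V : Type*} [Field F] [AddCommGroup V] [Module F V]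

theorem linearIndependent_pow_apply_of_pow_apply_eq_zero {A : Module.End F V} {n : ℕ} {u : V}
    (h : (A ^ (n + 1)) u = 0) (hu : (A ^ n) u ≠ 0) :
    LinearIndependent F fun i : Fin (n + 1) => (A ^ (i : ℕ)) u := by
  induction n generalizing u with
  | zero =>
    rw [zero_add] at *
    exact LinearIndependent.of_subsingleton 0 (by simpa using hu)
  | succ n ih =>
    have hcons : (fun i : Fin (n + 2) => (A ^ (i : ℕ)) u) =
        Fin.cons u fun i : Fin (n + 1) => (A ^ (i : ℕ)) (A u) := by
      ext i
      cases i using Fin.cases <;> simp [pow_succ]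
    rw [hcons, linearIndependent_finCons]
    refine ⟨ih (by simpa [pow_succ] using h) (by simpa [pow_succ] using hu), fun hmem => hu ?_⟩
    have hle : Submodule.span F (Set.range fun i : Fin (n + 1) => (A ^ (i : ℕ)) (A u)) ≤
        LinearMap.ker (A ^ (n + 1)) := by
      rw [Submodule.span_le]
      rintro _ ⟨i, rfl⟩
      rw [SetLike.mem_coe, LinearMap.mem_ker, ← Module.End.mul_apply,
        (Commute.pow_pow_self A _ _).eq, Module.End.mul_apply, ← Module.End.mul_apply _ A,
        ← pow_succ, h, map_zero]
    exact hle hmem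

/-- Adding the corner entry `c` turns a nilpotent Jordan block into the companion matrix of
`X ^ (n + 1) - c`. -/
theorem exists_sq_eq_zero_and_sub_pow_eq_algebraMap {A : Module.End F V} {n : ℕ} (hn : n ≠ 0)
    (hV : finrank F V = n + 1) (hA : A ^ (n + 1) = 0) (hA' : A ^ n ≠ 0) (c : F) :
    ∃ N : Module.End F V, N ^ 2 = 0 ∧ (A - N) ^ (n + 1) = algebraMap F (Module.End F V) c := by
  obtain ⟨u, hu⟩ : ∃ u, (A ^ n) u ≠ 0 := by
    by_contra! h
    exact hA' (LinearMap.ext h)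
  have hAu : (A ^ (n + 1)) u = 0 := by rw [hA, LinearMap.zero_apply]
  let b : Basis (Fin (n + 1)) F V := basisOfLinearIndependentOfCardEqFinrank
    (linearIndependent_pow_apply_of_pow_apply_eq_zero hAu hu) (by simp [hV])
  have hb (i : Fin (n + 1)) : b i = (A ^ (i : ℕ)) u := by simp [b]
  let φ : V →ₗ[F] F := b.coord (Fin.last n)
  have hφ {i : ℕ} (hi : i < n) : φ ((A ^ i) u) = 0 := by
    rw [← hb ⟨i, by omega⟩, Basis.coord_apply, b.repr_self]
    exact Finsupp.single_eq_of_ne (by simp [Fin.ext_iff]; omega)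
  have hφlast : φ ((A ^ n) u) = 1 := by
    rw [show (A ^ n) u = b (Fin.last n) by rw [hb, Fin.val_last], Basis.coord_apply, b.repr_self,
      Finsupp.single_eq_same]
  let N : Module.End F V := -φ.smulRight (c • u)
  have hpow {i : ℕ} (hi : i ≤ n) : ((A - N) ^ i) u = (A ^ i) u := by
    induction i with
    | zero => rfl
    | succ i ih =>
      rw [pow_succ', Module.End.mul_apply, ih (by omega)]
      simp [N, hφ hi, pow_succ']
  have hlast : ((A - N) ^ (n + 1)) u = c • u := by
    rw [pow_succ', Module.End.mul_apply, hpow le_rfl, LinearMap.sub_apply, ← Module.End.mul_apply,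
      ← pow_succ', hAu]
    simp [N, hφlast]
  refine ⟨N, ?_, b.ext fun i => ?_⟩
  · ext v
    have : φ u = 0 := hφ (i := 0) (by omega)
    simp [N, pow_two, this]
  · rw [hb, ← hpow (by omega), ← Module.End.mul_apply, (Commute.pow_pow_self (A - N) _ _).eq,
      Module.End.mul_apply, hlast, map_smul, Module.algebraMap_end_apply]

theorem isFlexiblyTorsionAddSquareZero_of_pow_finrank_eq_zero
    (hinf : {c : F | IsOfFinOrder c}.Infinite) {A : Module.End F V} {n : ℕ} (hn : n ≠ 0)
    (hV : finrank F V = n + 1) (hA : A ^ (n + 1) = 0) (hA' : A ^ n ≠ 0) :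
    IsFlexiblyTorsionAddSquareZero F A := by
  intro q hq
  obtain ⟨c, hc, hcq⟩ :=
    (hinf.sdiff (finite_setOf_not_isCoprime_X_pow_sub_C hq (n + 1))).nonempty
  obtain ⟨N, hN, hpow⟩ := exists_sq_eq_zero_and_sub_pow_eq_algebraMap hn hV hA hA' c
  refine ⟨A - N, N, .of_pow ?_ n.succ_ne_zero, hN, ?_, (sub_add_cancel A N).symm⟩
  · rw [hpow]
    exact (algebraMap F (Module.End F V)).toMonoidHom.isOfFinOrder hc
  · exact isUnit_aeval_of_isCoprime (by simp [hpow]) (not_not.1 hcq)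

end Cyclic

section Extension

theorem isUnit_of_restrict_of_mapQ {R M : Type*} [Ring R] [AddCommGroup M] [Module R M]
    {U : Submodule R M} {T : Module.End R M} {T₁ : Module.End R U} {T₂ : Module.End R (M ⧸ U)}
    (h₁ : ∀ u : U, T u = T₁ u) (h₂ : ∀ x, U.mkQ (T x) = T₂ (U.mkQ x))
    (hT₁ : IsUnit T₁) (hT₂ : IsUnit T₂) : IsUnit T := by
  rw [Module.End.isUnit_iff] at hT₁ hT₂ ⊢
  constructor
  · rw [injective_iff_map_eq_zero]
    intro x hx
    have hxU : U.mkQ x = 0 := hT₂.1 (by rw [← h₂, hx, map_zero, map_zero])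
    lift x to U using (Submodule.Quotient.mk_eq_zero U).1 hxU
    rw [h₁, Submodule.coe_eq_zero] at hx
    rw [(map_eq_zero_iff T₁ hT₁.1).1 hx, Submodule.coe_zero]
  · intro y
    obtain ⟨x', hx'⟩ := hT₂.2 (U.mkQ y)
    obtain ⟨x, rfl⟩ := U.mkQ_surjective x'
    have hy : y - T x ∈ U := by
      rw [← Submodule.Quotient.mk_eq_zero, ← Submodule.mkQ_apply, map_sub, h₂, hx', sub_self]
    obtain ⟨u, hu⟩ := hT₁.2 ⟨y - T x, hy⟩
    exact ⟨x + u, by rw [map_add, h₁, hu, add_sub_cancel]⟩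

variable {R M : Type*} [CommRing R] [AddCommGroup M] [Module R M]

theorem aeval_apply_of_semiconj {M' : Type*} [AddCommGroup M'] [Module R M'] {f : M →ₗ[R] M'}
    {A : Module.End R M} {B : Module.End R M'} (h : ∀ x, f (A x) = B (f x)) (q : R[X]) (x : M) :
    f (aeval A q x) = aeval B q (f x) := by
  induction q using Polynomial.induction_on' generalizing x with
  | add p q hp hq => simp [hp, hq]
  | monomial n a =>
    have hpow : f ∘ₗ (A ^ n) = (B ^ n) ∘ₗ f :=
      (Module.End.commute_pow_left_of_commute (LinearMap.ext h).symm n).symm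
    simpa [aeval_monomial] using congrArg (a • ·) (LinearMap.congr_fun hpow x)

theorem pow_mul_eq_one_of_restrict_of_mapQ {U : Submodule R M} {T : Module.End R M}
    {T₁ : Module.End R U} {T₂ : Module.End R (M ⧸ U)} (h₁ : ∀ u : U, T u = T₁ u)
    (h₂ : ∀ x, U.mkQ (T x) = T₂ (U.mkQ x)) {s r : ℕ} (hT₁ : T₁ ^ s = 1) (hT₂ : T₂ ^ r = 1)
    (hunit : IsUnit (T₂ ^ s - 1)) : T ^ (s * r) = 1 := by
  have hpow₁ (k : ℕ) (u : U) : (T ^ k) u = (T₁ ^ k) u := by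
    simpa using (aeval_apply_of_semiconj (f := U.subtype) (fun u => (h₁ u).symm) (X ^ k) u).symm
  have hpow₂ (k : ℕ) (x : M) : U.mkQ ((T ^ k) x) = (T₂ ^ k) (U.mkQ x) := by
    simpa using aeval_apply_of_semiconj h₂ (X ^ k) x
  have hkills (u : U) : (T ^ s - 1) u = 0 := by simp [hpow₁, hT₁]
  have hkills' (u : U) : (T ^ (s * r) - 1) u = 0 := by
    simp [hpow₁, show T₁ ^ (s * r) = 1 by rw [pow_mul, hT₁, one_pow]]
  have hmem (x : M) : (T ^ (s * r) - 1) x ∈ U := by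
    rw [← Submodule.Quotient.mk_eq_zero, ← Submodule.mkQ_apply, LinearMap.sub_apply, map_sub,
      hpow₂, mul_comm s, pow_mul, hT₂, one_pow]
    simp
  have hcomm : Commute (T ^ (s * r) - 1) (T ^ s - 1) :=
    ((Commute.pow_pow_self T _ _).sub_left (Commute.one_left _)).sub_right (Commute.one_right _)
  refine sub_eq_zero.1 (LinearMap.ext fun y => ?_)
  obtain ⟨x', hx'⟩ := ((Module.End.isUnit_iff _).1 hunit).2 (U.mkQ y)
  obtain ⟨x, rfl⟩ := U.mkQ_surjective x'
  have hy : y - (T ^ s - 1) x ∈ U := by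
    rw [← Submodule.Quotient.mk_eq_zero, ← Submodule.mkQ_apply, map_sub, ← hx',
      LinearMap.sub_apply, LinearMap.sub_apply, map_sub, hpow₂]
    simp
  calc (T ^ (s * r) - 1) y
      = (T ^ (s * r) - 1) (y - (T ^ s - 1) x) + (T ^ (s * r) - 1) ((T ^ s - 1) x) := by
        rw [← map_add, sub_add_cancel]
    _ = (T ^ s - 1) ((T ^ (s * r) - 1) x) := by
        rw [hkills' ⟨_, hy⟩, zero_add, ← Module.End.mul_apply, hcomm.eq, Module.End.mul_apply]
    _ = 0 := hkills ⟨_, hmem x⟩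

end Extension

section Splitting

variable {F V : Type*} [Field F] [AddCommGroup V] [Module F V]

theorem exists_linearEquiv_prod_quotient (U : Submodule F V) :
    ∃ e : V ≃ₗ[F] U × (V ⧸ U), (∀ u : U, e u = (u, 0)) ∧ ∀ v, (e v).2 = U.mkQ v := by
  obtain ⟨C, hC⟩ := U.exists_isCompl
  exact ⟨LinearMap.equivProdOfSurjectiveOfIsCompl (U.projectionOnto C hC) U.mkQ
    (Submodule.range_projectionOnto hC) U.range_mkQ
    (by rw [Submodule.ker_projectionOnto, U.ker_mkQ]; exact hC.symm),
    fun u => by simp, fun v => rfl⟩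

theorem IsFlexiblyTorsionAddSquareZero.of_restrict_of_mapQ {A : Module.End F V}
    {U : Submodule F V} (hU : U ≤ U.comap A)
    (h₁ : IsFlexiblyTorsionAddSquareZero F (A.restrict hU))
    (h₂ : IsFlexiblyTorsionAddSquareZero F (U.mapQ U A hU)) :
    IsFlexiblyTorsionAddSquareZero F A := by
  intro q hq
  obtain ⟨T₁, N₁, hT₁, hN₁, hq₁, hA₁⟩ := h₁ q hq
  obtain ⟨s, hs, hs₁⟩ := isOfFinOrder_iff_pow_eq_one.1 hT₁
  obtain ⟨T₂, N₂, hT₂, hN₂, hq₂, hA₂⟩ := h₂ ((X ^ s - 1) * q)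
    (mul_ne_zero (X_pow_sub_C_ne_zero hs 1) hq)
  obtain ⟨r, hr, hr₂⟩ := isOfFinOrder_iff_pow_eq_one.1 hT₂
  replace hq₂ := ((Commute.all (X ^ s - 1) q).map (aeval T₂)).isUnit_mul_iff.1
    (map_mul (aeval T₂) _ q ▸ hq₂)
  obtain ⟨e, he₁, he₂⟩ := exists_linearEquiv_prod_quotient U
  let N : Module.End F V := e.symm.conjRingEquiv (N₁.prodMap N₂)
  have hNU (u : U) : N u = N₁ u := by
    simp [N, LinearEquiv.conjRingEquiv, he₁, LinearEquiv.symm_apply_eq]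
  have hNQ (v : V) : U.mkQ (N v) = N₂ (U.mkQ v) := by
    rw [← he₂, ← he₂]
    simp [N, LinearEquiv.conjRingEquiv]
  have hTU (u : U) : (A - N) u = T₁ u := by
    have := congrArg Subtype.val (LinearMap.congr_fun hA₁ u)
    simpa [hNU, sub_eq_iff_eq_add] using this
  have hTQ (v : V) : U.mkQ ((A - N) v) = T₂ (U.mkQ v) := by
    have := LinearMap.congr_fun hA₂ (U.mkQ v)
    rw [LinearMap.sub_apply, map_sub, hNQ, sub_eq_iff_eq_add]
    simpa using this
  refine ⟨A - N, N, ?_, ?_, ?_, (sub_add_cancel A N).symm⟩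
  · exact isOfFinOrder_iff_pow_eq_one.2 ⟨s * r, Nat.mul_pos hs hr,
      pow_mul_eq_one_of_restrict_of_mapQ hTU hTQ hs₁ hr₂ (by simpa using hq₂.1)⟩
  · have : (N₁.prodMap N₂ : Module.End F (U × (V ⧸ U))) ^ 2 = 0 := by
      rw [pow_two, Module.End.mul_eq_comp, LinearMap.prodMap_comp, ← Module.End.mul_eq_comp,
        ← Module.End.mul_eq_comp, ← pow_two, ← pow_two, hN₁, hN₂]
      exact LinearMap.prodMap_zero
    rw [← map_pow, this, map_zero]
  · exact isUnit_of_restrict_of_mapQ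
      (fun u => (aeval_apply_of_semiconj (f := U.subtype) (fun u => (hTU u).symm) q u).symm)
      (aeval_apply_of_semiconj hTQ q) hq₁ hq₂.2

end Splitting

section Dimension

variable {F V W : Type*} [Field F] [AddCommGroup V] [Module F V] [AddCommGroup W] [Module F W]
  [FiniteDimensional F V]

theorem finrank_comap_eq_finrank_range_inf_add_finrank_ker (f : V →ₗ[F] W) (S : Submodule F W) :
    finrank F (S.comap f) = finrank F ↥(LinearMap.range f ⊓ S) + finrank F (LinearMap.ker f) := by
  have hker : LinearMap.ker f ≤ S.comap f := Submodule.comap_mono bot_le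
  rw [← LinearMap.finrank_range_add_finrank_ker (f.domRestrict (S.comap f)),
    LinearMap.range_domRestrict, Submodule.map_comap_eq, LinearMap.ker_domRestrict,
    ← Submodule.finrank_map_subtype_eq, Submodule.map_comap_subtype, inf_eq_right.2 hker]

theorem finrank_ker_mapQ_add_finrank {A : Module.End F V} {U : Submodule F V}
    (hU : U ≤ U.comap A) :
    finrank F (LinearMap.ker (U.mapQ U A hU)) + finrank F U =
      finrank F (LinearMap.ker A) + finrank F ↥(LinearMap.range A ⊓ U) := by
  have h := finrank_comap_eq_finrank_range_inf_add_finrank_ker U.mkQ ((U.comap A).map U.mkQ)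
  rw [U.range_mkQ, top_inf_eq, U.comap_map_mkQ, sup_eq_right.2 hU, U.ker_mkQ,
    finrank_comap_eq_finrank_range_inf_add_finrank_ker] at h
  rw [Submodule.ker_mapQ, ← h, add_comm]

end Dimension

section Nilpotent

variable {F V : Type*} [Field F] [AddCommGroup V] [Module F V] {A : Module.End F V}

theorem exists_apply_apply_eq_zero_and_apply_ne_zero (hA : IsNilpotent A) (hA₀ : A ≠ 0) :
    ∃ x, A (A x) = 0 ∧ A x ≠ 0 := by
  by_contra! h
  obtain ⟨n, hn⟩ := hA
  have hpow (n : ℕ) : A ^ (n + 1) = 0 → A = 0 := by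
    induction n with
    | zero => simp
    | succ n ih =>
      refine fun hn => ih (LinearMap.ext fun x => ?_)
      rw [pow_succ', Module.End.mul_apply]
      exact h _ (by simpa [pow_succ'] using LinearMap.congr_fun hn x)
  exact hA₀ (hpow n (by rw [pow_succ, hn, zero_mul]))

variable {x : V}

theorem span_pair_le_comap (hx : A (A x) = 0) :
    Submodule.span F {x, A x} ≤ (Submodule.span F {x, A x}).comap A := by
  rw [Submodule.span_le]
  rintro _ (rfl | rfl)
  · exact Submodule.subset_span (by simp)
  · simp [hx]

theorem finrank_span_pair_apply (hx : A (A x) = 0) (hAx : A x ≠ 0) :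
    finrank F (Submodule.span F {x, A x}) = 2 := by
  have hli : LinearIndependent F ![x, A x] := by
    convert linearIndependent_pow_apply_of_pow_apply_eq_zero (A := A) (n := 1) (u := x)
      (by simpa [pow_two] using hx) (by simpa using hAx) with i
    fin_cases i <;> simp
  rw [← Matrix.range_cons_cons_empty]
  simpa only [Fintype.card_fin] using finrank_span_eq_card hli

theorem IsFlexiblyTorsionAddSquareZero.of_mapQ_span_pair
    (hinf : {c : F | IsOfFinOrder c}.Infinite) (hx : A (A x) = 0) (hAx : A x ≠ 0)
    (h : IsFlexiblyTorsionAddSquareZero F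
      ((Submodule.span F {x, A x}).mapQ (Submodule.span F {x, A x}) A (span_pair_le_comap hx))) :
    IsFlexiblyTorsionAddSquareZero F A := by
  refine .of_restrict_of_mapQ (span_pair_le_comap hx)
    (isFlexiblyTorsionAddSquareZero_of_pow_finrank_eq_zero hinf one_ne_zero
      (finrank_span_pair_apply hx hAx) (LinearMap.ext fun u => Subtype.ext ?_) fun h₁ => hAx ?_) h
  · obtain ⟨a, b, hu⟩ := Submodule.mem_span_pair.1 u.2
    simp [pow_two, ← hu, hx]
  · have hx₁ := LinearMap.congr_fun h₁ ⟨x, Submodule.subset_span (by simp)⟩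
    simpa using congrArg Subtype.val hx₁

theorem exists_notMem_range_or_comap_ker_le_range (hA : IsNilpotent A) (hA₀ : A ≠ 0) :
    (∃ x, A (A x) = 0 ∧ A x ≠ 0 ∧ x ∉ LinearMap.range A) ∨
      (LinearMap.ker A).comap A ≤ LinearMap.range A := by
  refine or_iff_not_imp_left.2 fun hout x hx => ?_
  push Not at hout
  by_cases hAx : A x = 0
  · obtain ⟨y, hy, hAy⟩ := exists_apply_apply_eq_zero_and_apply_ne_zero hA hA₀
    simpa using sub_mem (hout (x + y) (by simp [hAx, hy]) (by simpa [hAx] using hAy))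
      (hout y hy hAy)
  · exact hout x hx hAx

variable [FiniteDimensional F V]

theorem finrank_comap_ker_eq_two_mul (h : LinearMap.ker A ≤ LinearMap.range A) :
    finrank F ((LinearMap.ker A).comap A) = 2 * finrank F (LinearMap.ker A) := by
  rw [finrank_comap_eq_finrank_range_inf_add_finrank_ker, inf_eq_right.2 h, two_mul]

/-- All Jordan blocks have size at least three, so the bound on the dimension leaves a single block
of size exactly three. -/
theorem isFlexiblyTorsionAddSquareZero_of_comap_ker_le_range
    (hinf : {c : F | IsOfFinOrder c}.Infinite) (hA : IsNilpotent A) (hA₀ : A ≠ 0)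
    (hle : (LinearMap.ker A).comap A ≤ LinearMap.range A)
    (hker : finrank F V < 2 * finrank F (LinearMap.ker A) + 2) :
    IsFlexiblyTorsionAddSquareZero F A := by
  have hsq := finrank_comap_ker_eq_two_mul ((Submodule.comap_mono bot_le).trans hle)
  have hrank := Submodule.finrank_mono hle
  have hnull := LinearMap.finrank_range_add_finrank_ker A
  have hpos : 0 < finrank F (LinearMap.ker A) := by
    obtain ⟨y, hy, hAy⟩ := exists_apply_apply_eq_zero_and_apply_ne_zero hA hA₀
    exact Module.finrank_pos_iff_exists_ne_zero.2 ⟨⟨A y, hy⟩, by simpa [Subtype.ext_iff] using hAy⟩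
  have hV : finrank F V = 3 := by omega
  have hA₃ : A ^ 3 = 0 := by
    simpa [(LinearMap.isNilpotent_iff_charpoly A).1 hA, hV] using LinearMap.aeval_self_charpoly A
  refine isFlexiblyTorsionAddSquareZero_of_pow_finrank_eq_zero hinf two_ne_zero hV hA₃ fun hA₂ => ?_
  have htop : (LinearMap.ker A).comap A = ⊤ :=
    eq_top_iff.2 fun x _ => by simpa [pow_two] using LinearMap.congr_fun hA₂ x
  rw [htop, finrank_top] at hsq
  omega

theorem isFlexiblyTorsionAddSquareZero_of_isNilpotent
    (hinf : {c : F | IsOfFinOrder c}.Infinite) (hA : IsNilpotent A)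
    (hker : 2 * finrank F (LinearMap.ker A) ≤ finrank F V) :
    IsFlexiblyTorsionAddSquareZero F A := by
  induction hV : finrank F V using Nat.strong_induction_on generalizing V with | _ n ih
  obtain hsub | hnon := subsingleton_or_nontrivial V
  · exact fun q _ => ⟨1, 0, .one, by simp, isUnit_of_subsingleton _, Subsingleton.elim _ _⟩
  have hA₀ : A ≠ 0 := by
    rintro rfl
    have := finrank_pos (R := F) (M := V)
    rw [LinearMap.ker_zero, finrank_top] at hker
    omega
  have split {x : V} (hx : A (A x) = 0) (hAx : A x ≠ 0)
      (h : 2 * (finrank F (LinearMap.ker A) +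
        finrank F ↥(LinearMap.range A ⊓ Submodule.span F {x, A x})) ≤ n + 2) :
      IsFlexiblyTorsionAddSquareZero F A := by
    have hU := finrank_span_pair_apply hx hAx
    have hquot := (Submodule.span F {x, A x}).finrank_quotient_add_finrank
    have hkerQ := finrank_ker_mapQ_add_finrank (span_pair_le_comap hx)
    exact .of_mapQ_span_pair hinf hx hAx
      (ih _ (by omega) (Module.End.IsNilpotent.mapQ _ hA) (by omega) rfl)
  obtain ⟨x, hx, hAx, hxr⟩ | hle := exists_notMem_range_or_comap_ker_le_range hA hA₀
  · have hlt : LinearMap.range A ⊓ Submodule.span F {x, A x} < Submodule.span F {x, A x} :=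
      inf_le_right.lt_of_not_ge fun h => hxr (h (Submodule.subset_span (by simp))).1
    have := Submodule.finrank_lt_finrank_of_lt hlt
    rw [finrank_span_pair_apply hx hAx] at this
    exact split hx hAx (by omega)
  by_cases hroom : 2 * finrank F (LinearMap.ker A) + 2 ≤ n
  · obtain ⟨x, hx, hAx⟩ := exists_apply_apply_eq_zero_and_apply_ne_zero hA hA₀
    have := Submodule.finrank_mono
      (inf_le_right : LinearMap.range A ⊓ Submodule.span F {x, A x} ≤ Submodule.span F {x, A x})
    rw [finrank_span_pair_apply hx hAx] at this
    exact split hx hAx (by omega)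
  · exact isFlexiblyTorsionAddSquareZero_of_comap_ker_le_range hinf hA hA₀ hle (by omega)

end Nilpotent

section Block

theorem isOfFinOrder_prodMap {R M M' : Type*} [Ring R] [AddCommGroup M] [Module R M]
    [AddCommGroup M'] [Module R M'] {f : Module.End R M} {g : Module.End R M'}
    (hf : IsOfFinOrder f) (hg : IsOfFinOrder g) :
    IsOfFinOrder (f.prodMap g : Module.End R (M × M')) :=
  (LinearMap.prodMapRingHom R M M').toMonoidHom.isOfFinOrder (hf.prod_mk hg)

variable {R U X : Type*} [Ring R] [AddCommGroup U] [Module R U] [AddCommGroup X] [Module R X]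

/-- On the two copies of `U` the torsion summand is `[[0, -P], [P, P]]`, whose cube is `-P ^ 3`. -/
theorem isTorsionAddSquareZero_of_forall_apply_eq {P : Module.End R U} {Q : Module.End R X}
    {D : X →ₗ[R] U} {A : Module.End R ((U × X) × U)}
    (hA : ∀ u x z, A ((u, x), z) = ((P u + D x, Q x), -D x))
    (hP : IsOfFinOrder P) (hQ : IsOfFinOrder Q) : IsTorsionAddSquareZero A := by
  let pU : (U × X) × U →ₗ[R] U := LinearMap.fst R U X ∘ₗ LinearMap.fst R (U × X) U
  let pX : (U × X) × U →ₗ[R] X := LinearMap.snd R U X ∘ₗ LinearMap.fst R (U × X) U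
  let pZ : (U × X) × U →ₗ[R] U := LinearMap.snd R (U × X) U
  let T : Module.End R ((U × X) × U) :=
    ((-(P ∘ₗ pZ)).prod (Q ∘ₗ pX)).prod (P ∘ₗ pU + P ∘ₗ pZ)
  let g : (U × X) × U →ₗ[R] U := P ∘ₗ pU + P ∘ₗ pZ + D ∘ₗ pX
  let N : Module.End R ((U × X) × U) := (g.prod 0).prod (-g)
  have hT₃ : T ^ 3 = ((-P ^ 3).prodMap (Q ^ 3)).prodMap (-P ^ 3) := by
    ext <;> simp [T, pU, pX, pZ, pow_succ]
  have hneg : IsOfFinOrder (-P ^ 3) :=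
    .of_pow (n := 2) (by simpa only [neg_sq] using hP.pow.pow) two_ne_zero
  refine ⟨T, N, .of_pow (n := 3) ?_ three_ne_zero, ?_, ?_⟩
  · rw [hT₃]
    exact isOfFinOrder_prodMap (isOfFinOrder_prodMap hneg hQ.pow) hneg
  · ext <;> simp [N, g, pow_two, pU, pX, pZ]
  · ext <;> simp [T, N, g, pU, pX, pZ, hA]

theorem isTorsionAddSquareZero_prodMap_zero_of_apply_eq {P : Module.End R U} {Q : Module.End R X}
    {D : X →ₗ[R] U} {B : Module.End R (U × X)} (hB : ∀ u x, B (u, x) = (P u + D x, Q x))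
    (hP : IsOfFinOrder P) (hQ : IsOfFinOrder Q) :
    IsTorsionAddSquareZero (B.prodMap 0 : Module.End R ((U × X) × U)) := by
  obtain ⟨s, hs, hQs⟩ := isOfFinOrder_iff_pow_eq_one.1 hQ
  -- `y` solves `y ∘ B = -D`, so the shear `(w, z) ↦ (w, z + y w)` moves `D` into the zero block.
  let y : U × X →ₗ[R] U := -(D ∘ₗ (Q ^ (s - 1)).comp (LinearMap.snd R U X))
  have hQinv (x : X) : (Q ^ (s - 1)) (Q x) = x := by
    rw [← Module.End.mul_apply, pow_sub_one_mul hs.ne', hQs, Module.End.one_apply]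
  have hy (w : U × X) : y (B w) = -D w.2 := by simp [y, hB, hQinv]
  have hblock : IsTorsionAddSquareZero
      (B.prod (-(D ∘ₗ LinearMap.snd R U X)) ∘ₗ LinearMap.fst R (U × X) U) :=
    isTorsionAddSquareZero_of_forall_apply_eq (P := P) (Q := Q) (D := D)
      (fun u x z => by simp [hB]) hP hQ
  exact hblock.of_linearEquiv ((LinearEquiv.refl R (U × X)).skewProd (LinearEquiv.refl R U) y)
    fun w => by simp [hy]

end Block

section Invariant

variable {F V : Type*} [Field F] [AddCommGroup V] [Module F V] [FiniteDimensional F V]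

theorem exists_hasEigenvalue_of_splits [Nontrivial V] {f : Module.End F V} {p : F[X]}
    (hp : p ≠ 0) (hsplit : p.Splits) (hfp : aeval f p = 0) : ∃ μ, f.HasEigenvalue μ := by
  have hdeg : (minpoly F f).degree ≠ 0 := (minpoly.degree_pos (Algebra.IsIntegral.isIntegral f)).ne'
  obtain ⟨μ, hμ⟩ := (hsplit.of_dvd hp (minpoly.dvd F f hfp)).exists_eval_eq_zero hdeg
  exact ⟨μ, Module.End.hasEigenvalue_of_isRoot hμ⟩

theorem exists_le_comap_finrank_eq {f : Module.End F V} {p : F[X]} (hp : p ≠ 0)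
    (hsplit : p.Splits) (hfp : aeval f p = 0) {d : ℕ} (hd : d ≤ finrank F V) :
    ∃ U : Submodule F V, U ≤ U.comap f ∧ finrank F U = d := by
  induction d with
  | zero => exact ⟨⊥, bot_le, finrank_bot F V⟩
  | succ d ih =>
    obtain ⟨U, hU, hUd⟩ := ih (by omega)
    have hquot := U.finrank_quotient_add_finrank
    have : Nontrivial (V ⧸ U) := nontrivial_of_finrank_pos (R := F) (by omega)
    have hQ : aeval (U.mapQ U f hU) p = 0 := by
      refine LinearMap.ext fun x => ?_
      obtain ⟨v, rfl⟩ := U.mkQ_surjective x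
      rw [← aeval_apply_of_semiconj (f := U.mkQ) (fun _ => rfl) p v, hfp]
      simp
    obtain ⟨μ, hμ⟩ := exists_hasEigenvalue_of_splits hp hsplit hQ
    obtain ⟨x, hx⟩ := hμ.exists_hasEigenvector
    obtain ⟨v, rfl⟩ := U.mkQ_surjective x
    have hv : v ∉ U := fun h => hx.2 ((Submodule.Quotient.mk_eq_zero U).2 h)
    have hfv : f v - μ • v ∈ U := by
      rw [← Submodule.Quotient.mk_eq_zero, Submodule.Quotient.mk_sub, sub_eq_zero]
      exact hx.apply_eq_smul
    refine ⟨U ⊔ Submodule.span F {v}, sup_le (hU.trans (Submodule.comap_mono le_sup_left)) ?_,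
      by rw [Submodule.finrank_sup_span_singleton hv, hUd]⟩
    rw [Submodule.span_singleton_le_iff_mem, Submodule.mem_comap, ← sub_add_cancel (f v) (μ • v)]
    exact add_mem (Submodule.mem_sup_left hfv)
      (Submodule.mem_sup_right (Submodule.smul_mem _ _ (Submodule.mem_span_singleton_self v)))

end Invariant

section Torsion

variable {F W Z K : Type*} [Field F] [AddCommGroup W] [Module F W] [AddCommGroup Z] [Module F Z]
  [AddCommGroup K] [Module F K]

theorem isTorsionAddSquareZero_prodMap_zero_of_le_comap {B : Module.End F W}
    (hB : IsOfFinOrder B) {U : Submodule F W} (hU : U ≤ U.comap B) (θ : Z ≃ₗ[F] U) :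
    IsTorsionAddSquareZero (B.prodMap 0 : Module.End F (W × Z)) := by
  obtain ⟨s, hs, hBs⟩ := isOfFinOrder_iff_pow_eq_one.1 hB
  obtain ⟨e, he₁, he₂⟩ := exists_linearEquiv_prod_quotient U
  let P : Module.End F U := B.restrict hU
  let Q : Module.End F (W ⧸ U) := U.mapQ U B hU
  have hP : P ^ s = 1 := by
    ext u
    simp [P, Module.End.pow_restrict, hBs]
  have hQ : Q ^ s = 1 := by
    ext w
    rw [← Submodule.mapQ_pow]
    simp [hBs]
  let B' : Module.End F (U × (W ⧸ U)) := e.conjRingEquiv B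
  have hB' (u : U) (x : W ⧸ U) : B' (u, x) = (P u + (B' (0, x)).1, Q x) := by
    have hu : B' (u, 0) = (P u, 0) := by
      simp [B', LinearEquiv.conjRingEquiv, ← he₁, P]
    have hx : (B' (0, x)).2 = Q x := by
      obtain ⟨w, hw⟩ := e.surjective (0, x)
      obtain rfl : U.mkQ w = x := by rw [← he₂, hw]
      rw [LinearEquiv.conjRingEquiv_apply_apply, ← hw, e.symm_apply_apply, he₂]
      simp [Q]
    have hux : (u, x) = (u, 0) + (0, x) := by simp
    rw [hux, map_add, hu, ← hx]
    exact Prod.ext rfl (zero_add _)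
  exact (isTorsionAddSquareZero_prodMap_zero_of_apply_eq
    (D := LinearMap.fst F U (W ⧸ U) ∘ₗ B' ∘ₗ LinearMap.inr F U (W ⧸ U)) hB'
      (isOfFinOrder_iff_pow_eq_one.2 ⟨s, hs, hP⟩)
      (isOfFinOrder_iff_pow_eq_one.2 ⟨s, hs, hQ⟩)).of_linearEquiv (e.prodCongr θ) fun w => by
        simp [B', LinearEquiv.conjRingEquiv]

theorem isTorsionAddSquareZero_prodMap_zero [FiniteDimensional F W] [FiniteDimensional F Z]
    (hF : ∀ j, 0 < j → (X ^ j - 1 : F[X]).Splits) {B : Module.End F W} (hB : IsOfFinOrder B)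
    (hZ : finrank F Z ≤ finrank F W) :
    IsTorsionAddSquareZero (B.prodMap 0 : Module.End F (W × Z)) := by
  obtain ⟨s, hs, hBs⟩ := isOfFinOrder_iff_pow_eq_one.1 hB
  obtain ⟨U, hU, hUZ⟩ := exists_le_comap_finrank_eq (X_pow_sub_C_ne_zero hs 1)
    (by simpa using hF s hs) (f := B) (by simp [hBs]) hZ
  exact isTorsionAddSquareZero_prodMap_zero_of_le_comap hB hU (LinearEquiv.ofFinrankEq Z U hUZ.symm)

end Torsion

section Restriction

variable {R M F V : Type*} [Ring R] [AddCommGroup M] [Module R M] [Field F] [AddCommGroup V]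
  [Module F V]

theorem IsTorsionAddSquareZero.of_isCompl {f : Module.End R M} {p q : Submodule R M}
    (hpq : IsCompl p q) {hp : ∀ x ∈ p, f x ∈ p} {hq : ∀ x ∈ q, f x ∈ q}
    (h : IsTorsionAddSquareZero ((f.restrict hp).prodMap (f.restrict hq) : Module.End R (p × q))) :
    IsTorsionAddSquareZero f :=
  h.of_linearEquiv (p.prodEquivOfIsCompl q hpq).symm fun x => by
    obtain ⟨y, rfl⟩ := (p.prodEquivOfIsCompl q hpq).surjective x
    rw [LinearEquiv.symm_apply_apply, LinearEquiv.symm_apply_eq]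
    simp

theorem finrank_ker_restrict {f : Module.End F V} {p : Submodule F V} (hp : ∀ x ∈ p, f x ∈ p) :
    finrank F (LinearMap.ker (f.restrict hp)) = finrank F ↥(p ⊓ LinearMap.ker f) := by
  rw [LinearMap.ker_restrict, ← Submodule.finrank_map_subtype_eq, Submodule.map_comap_subtype]

end Restriction

section Assembly

variable {F W K V : Type*} [Field F] [AddCommGroup W] [Module F W] [AddCommGroup K] [Module F K]
  [AddCommGroup V] [Module F V] [FiniteDimensional F K] {C : Module.End F K}

theorem exists_isCompl_le_ker {d : ℕ}
    (hd : d ≤ finrank F (LinearMap.ker C) - finrank F (LinearMap.range C)) :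
    ∃ Z K' : Submodule F K, IsCompl Z K' ∧ Z ≤ LinearMap.ker C ∧ LinearMap.range C ≤ K' ∧
      finrank F Z = d := by
  obtain ⟨L, hdisj, hsup⟩ := IsModularLattice.exists_disjoint_and_sup_eq
    (inf_le_left : LinearMap.ker C ⊓ LinearMap.range C ≤ LinearMap.ker C)
  have hLker : L ≤ LinearMap.ker C := hsup ▸ le_sup_right
  have hL : d ≤ finrank F L := by
    have hsum := Submodule.finrank_sup_add_finrank_inf_eq (LinearMap.ker C ⊓ LinearMap.range C) L
    rw [hsup, hdisj.eq_bot, finrank_bot] at hsum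
    have := Submodule.finrank_mono
      (inf_le_right : LinearMap.ker C ⊓ LinearMap.range C ≤ LinearMap.range C)
    omega
  obtain ⟨Z, -, hZd⟩ := exists_le_comap_finrank_eq (f := (0 : Module.End F L)) X_ne_zero
    Splits.X (by simp) hL
  have hZL : Z.map L.subtype ≤ L := L.map_subtype_le Z
  have hZrange : Disjoint (LinearMap.range C) (Z.map L.subtype) := by
    rw [disjoint_iff_inf_le]
    exact (le_inf (le_inf (inf_le_right.trans (hZL.trans hLker)) inf_le_left)
      (inf_le_right.trans hZL)).trans hdisj.le_bot
  obtain ⟨K', hrange, hcompl⟩ := hZrange.exists_isCompl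
  exact ⟨Z.map L.subtype, K', hcompl.symm, hZL.trans hLker, hrange, by
    rw [Submodule.finrank_map_subtype_eq, hZd]⟩

theorem finrank_add_finrank_ker_restrict {Z K' : Submodule F K} (hcompl : IsCompl Z K')
    (hZ : Z ≤ LinearMap.ker C) (hK' : ∀ x ∈ K', C x ∈ K') :
    finrank F Z + finrank F (LinearMap.ker (C.restrict hK')) = finrank F (LinearMap.ker C) := by
  have hker : Z ⊔ K' ⊓ LinearMap.ker C = LinearMap.ker C := by
    rw [← sup_inf_assoc_of_le K' hZ, hcompl.sup_eq_top, top_inf_eq]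
  have hsum := Submodule.finrank_sup_add_finrank_inf_eq Z (K' ⊓ LinearMap.ker C)
  rw [hker, (hcompl.disjoint.mono_right inf_le_left).eq_bot, finrank_bot, add_zero] at hsum
  rw [hsum, finrank_ker_restrict]

theorem isTorsionAddSquareZero_prodMap [FiniteDimensional F W]
    (hF : ∀ j, 0 < j → (X ^ j - 1 : F[X]).Splits) {B : Module.End F W} (hB : IsOfFinOrder B)
    (hC : IsNilpotent C)
    (hker : 2 * finrank F (LinearMap.ker C) ≤ finrank F W + finrank F K) :
    IsTorsionAddSquareZero (B.prodMap C : Module.End F (W × K)) := by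
  have hnull := LinearMap.finrank_range_add_finrank_ker C
  obtain ⟨Z, K', hcompl, hZ, hrange, hZd⟩ := exists_isCompl_le_ker (C := C) le_rfl
  have hK' (x : K) (_ : x ∈ K') : C x ∈ K' := hrange (LinearMap.mem_range_self C x)
  have hfinrank := Submodule.finrank_add_eq_of_isCompl hcompl
  have hker' := finrank_add_finrank_ker_restrict hcompl hZ hK'
  have hW : IsTorsionAddSquareZero (B.prodMap 0 : Module.End F (W × Z)) :=
    isTorsionAddSquareZero_prodMap_zero hF hB (by omega)
  have hN : IsTorsionAddSquareZero (C.restrict hK') :=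
    (isFlexiblyTorsionAddSquareZero_of_isNilpotent (infinite_setOf_isOfFinOrder hF)
      (Module.End.isNilpotent.restrict hK' hC) (by omega)).isTorsionAddSquareZero
  let e := ((LinearEquiv.prodAssoc F W Z K').trans
    ((LinearEquiv.refl F W).prodCongr (Z.prodEquivOfIsCompl K' hcompl))).symm
  refine (hW.prodMap hN).of_linearEquiv e fun x => ?_
  obtain ⟨⟨⟨w, z⟩, k⟩, rfl⟩ := e.symm.surjective x
  have hz : C z = 0 := hZ z.2
  rw [e.apply_symm_apply, ← e.eq_symm_apply]
  simp [e, hz]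

theorem isTorsionAddSquareZero_of_pow_eq_pow [FiniteDimensional F V]
    (hF : ∀ j, 0 < j → (X ^ j - 1 : F[X]).Splits) {f : Module.End F V} {m k : ℕ} (hkm : k < m)
    (hf : f ^ m = f ^ k) (hker : 2 * finrank F (LinearMap.ker f) ≤ finrank F V) :
    IsTorsionAddSquareZero f := by
  have hj : 0 < m - k := Nat.sub_pos_of_lt hkm
  have hinv (p : F[X]) (x : V) (hx : x ∈ LinearMap.ker (aeval f p)) :
      f x ∈ LinearMap.ker (aeval f p) := by
    rw [LinearMap.mem_ker] at hx ⊢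
    rw [← aeval_apply_of_semiconj (f := f) (fun _ => rfl) p x, hx, map_zero]
  have hcoprime : IsCoprime (X ^ (m - k) - 1 : F[X]) (X ^ k) :=
    .pow_right ⟨-1, X ^ (m - k - 1), by rw [pow_sub_one_mul hj.ne']; ring⟩
  have hcompl : IsCompl (LinearMap.ker (aeval f (X ^ (m - k) - 1 : F[X])))
      (LinearMap.ker (aeval f (X ^ k : F[X]))) := by
    refine ⟨disjoint_ker_aeval_of_isCoprime f hcoprime, codisjoint_iff.2 ?_⟩
    rw [sup_ker_aeval_eq_ker_aeval_mul_of_coprime f hcoprime, LinearMap.ker_eq_top]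
    simp [sub_mul, ← pow_add, Nat.sub_add_cancel hkm.le, hf]
  have hB : IsOfFinOrder (f.restrict (hinv (X ^ (m - k) - 1))) :=
    isOfFinOrder_iff_pow_eq_one.2 ⟨m - k, hj, by
      rw [Module.End.pow_restrict]
      ext ⟨x, hx⟩
      simpa [sub_eq_zero] using hx⟩
  have hC : IsNilpotent (f.restrict (hinv (X ^ k))) := ⟨k, by
    rw [Module.End.pow_restrict]
    ext ⟨x, hx⟩
    simpa using hx⟩
  have hdim := Submodule.finrank_add_eq_of_isCompl hcompl
  have hker' := (finrank_ker_restrict (hinv (X ^ k))).trans_le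
    (Submodule.finrank_mono inf_le_right)
  exact .of_isCompl hcompl (isTorsionAddSquareZero_prodMap hF hB hC (by omega))

end Assembly

theorem periodic_eq_torsion_add_squareZero_algClosed_general
    {F : Type*} [Field F] (hF : ∀ j, 0 < j → (X ^ j - 1 : F[X]).Splits)
    {ι : Type*} [Fintype ι] [DecidableEq ι] (A : Matrix ι ι F)
    {m k : ℕ} (hkm : k < m) (hA : A ^ m = A ^ k) (hrank : Fintype.card ι ≤ 2 * A.rank) :
    ∃ T N : Matrix ι ι F, IsUnit T ∧ (∃ s : ℕ, 1 ≤ s ∧ T ^ s = 1) ∧ N ^ 2 = 0 ∧ A = T + N := by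
  let φ : Matrix ι ι F ≃ₐ[F] Module.End F (ι → F) := Matrix.toLinAlgEquiv'
  have hnull := LinearMap.finrank_range_add_finrank_ker (φ A)
  rw [Module.finrank_fintype_fun_eq_card] at hnull
  have hrank' : A.rank = finrank F (LinearMap.range (φ A)) := rfl
  obtain ⟨T, N, hT, hN, hAT⟩ :=
    (isTorsionAddSquareZero_of_pow_eq_pow hF hkm (f := φ A) (by rw [← map_pow, hA, map_pow])
      (by rw [Module.finrank_fintype_fun_eq_card]; omega)).map φ.symm.toRingEquiv.toRingHom
  exact ⟨T, N, hT.isUnit, isOfFinOrder_iff_pow_eq_one.1 hT, hN, by simpa using hAT⟩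

/-- Over an algebraically closed field of characteristic zero, every periodic
matrix of rank at least `n/2` is the sum of a torsion matrix and a
square-zero matrix. -/
theorem periodic_eq_torsion_add_squareZero_algClosed
    {F : Type*} [Field F] [IsAlgClosed F] [CharZero F] {n : ℕ}
    (A : Matrix (Fin n) (Fin n) F)
    (hA : ∃ m k : ℕ, 1 ≤ k ∧ k < m ∧ A ^ m = A ^ k)
    (hrank : n ≤ 2 * A.rank) :
    ∃ T N : Matrix (Fin n) (Fin n) F,
      IsUnit T ∧ (∃ s : ℕ, 1 ≤ s ∧ T ^ s = 1) ∧ N ^ 2 = 0 ∧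
      A = T + N := by
  obtain ⟨m, k, -, hkm, hA⟩ := hA
  exact periodic_eq_torsion_add_squareZero_algClosed_general (fun j _ => IsAlgClosed.splits _) A
    hkm hA (by simpa using hrank)
end

section
/- Over a field of prime characteristic p, every periodic matrix A ∈ M_n(F) with rank(A) ≥ n/2 is the sum of a torsion matrix and a square-zero matrix. -/
/-!
Let `k` be the prime field. The matrix `A` is integral over `k`, hence similar to a direct sum of
companion matrices of polynomials whose coefficients are algebraic over `k`. So we may assume that
the entries of `A` lie in the algebraic closure `K` of `k` in `F`; the rank is not affected.

The rank condition says `dim ker A ≤ dim range A`. Hence some subspace `U` of dimension `dim ker A`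
meets neither `ker A` nor `range A`, and a square-zero `N` that embeds `ker A` into `U` and vanishes
on a complement containing `U` makes `A + N` invertible. This takes place over `K`, so `A + N` is
integral over the finite field `k`: it generates a finite algebra, and therefore has finite order.
-/

open Module Polynomial

section Integrality

variable {R A : Type*} [CommRing R] [Ring A] [Algebra R A] {a : A}

theorem isIntegral_of_pow_eq_pow {m k : ℕ} (hkm : k < m) (h : a ^ m = a ^ k) :
    IsIntegral R a := by
  nontriviality R
  exact ⟨X ^ m - X ^ k, monic_X_pow_sub (by simpa using hkm), by simp [h]⟩

theorem finite_powers_of_isIntegral [Finite R] (ha : IsIntegral R a) :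
    (Submonoid.powers a : Set A).Finite := by
  have : Module.Finite R (Algebra.adjoin R {a}) := .of_fg ha.fg_adjoin_singleton
  have : Finite (Algebra.adjoin R {a}) := Module.finite_of_finite R
  refine (Set.toFinite (Algebra.adjoin R {a} : Set A)).subset ?_
  exact Submonoid.powers_le.2 (Algebra.self_mem_adjoin_singleton R a)

end Integrality

theorem isOfFinOrder_of_finite_powers {M : Type*} [Monoid M] {a : M} (ha : IsUnit a)
    (h : (Submonoid.powers a : Set M).Finite) : IsOfFinOrder a := by
  obtain ⟨u, rfl⟩ := ha
  rw [Units.isOfFinOrder_val, ← finite_powers]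
  refine (h.preimage Units.val_injective.injOn).subset ?_
  rintro _ ⟨n, rfl⟩
  exact ⟨n, by simp⟩

theorem exists_notMem_notMem {R V : Type*} [Ring R] [AddCommGroup V] [Module R V]
    {P Q : Submodule R V} (hP : P ≠ ⊤) (hQ : Q ≠ ⊤) : ∃ v, v ∉ P ∧ v ∉ Q := by
  by_contra! h
  have hcover : ((⊤ : Submodule R V) : Set V) ⊆ P ∪ Q := fun v _ => or_iff_not_imp_left.2 (h v)
  rcases AddSubgroupClass.subset_union.1 hcover with h | h
  exacts [hP (top_le_iff.1 h), hQ (top_le_iff.1 h)]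

section UnitAddSqEqZero

variable {K V : Type*} [DivisionRing K] [AddCommGroup V] [Module K V] [FiniteDimensional K V]

theorem exists_finrank_eq_disjoint_disjoint {d : ℕ} {P Q : Submodule K V}
    (hP : finrank K P + d ≤ finrank K V) (hQ : finrank K Q + d ≤ finrank K V) :
    ∃ U : Submodule K V, finrank K U = d ∧ Disjoint U P ∧ Disjoint U Q := by
  induction d generalizing P Q with
  | zero => exact ⟨⊥, finrank_bot K V, disjoint_bot_left, disjoint_bot_left⟩
  | succ d ih =>
    have ne_top {P : Submodule K V} (hP : finrank K P + (d + 1) ≤ finrank K V) : P ≠ ⊤ := by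
      rintro rfl
      simp at hP
    obtain ⟨v, hvP, hvQ⟩ := exists_notMem_notMem (ne_top hP) (ne_top hQ)
    have hv : v ≠ 0 := fun h => hvP (h ▸ P.zero_mem)
    have finrank_sup {P : Submodule K V} (hP : finrank K P + (d + 1) ≤ finrank K V) :
        finrank K (P ⊔ K ∙ v : Submodule K V) + d ≤ finrank K V := by
      have := Submodule.finrank_add_le_finrank_add_finrank P (K ∙ v)
      have := finrank_span_singleton (K := K) hv
      omega
    have disjoint_sup {P U : Submodule K V} (hvP : v ∉ P) (hU : Disjoint U (P ⊔ K ∙ v)) :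
        Disjoint (U ⊔ K ∙ v) P :=
      Disjoint.disjoint_sup_left_of_disjoint_sup_right
        ((Submodule.disjoint_span_singleton' hv).2 hvP).symm (by rwa [sup_comm])
    obtain ⟨U, hU, hUP, hUQ⟩ := ih (finrank_sup hP) (finrank_sup hQ)
    refine ⟨U ⊔ K ∙ v, ?_, disjoint_sup hvP hUP, disjoint_sup hvQ hUQ⟩
    have hUv := Submodule.finrank_sup_add_finrank_inf_eq U (K ∙ v)
    rwa [(hUP.mono_right le_sup_right).eq_bot, finrank_bot, finrank_span_singleton hv, hU,
      add_zero] at hUv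

theorem exists_sq_eq_zero_disjoint_ker {U W : Submodule K V} (hUW : Disjoint U W)
    (h : finrank K W = finrank K U) :
    ∃ N : End K V, N ^ 2 = 0 ∧ LinearMap.range N ≤ U ∧ Disjoint W (LinearMap.ker N) := by
  obtain ⟨H, hUH, hH⟩ := hUW.exists_isCompl
  let e : W ≃ₗ[K] U := LinearEquiv.ofFinrankEq _ _ h
  let N : End K V := U.subtype ∘ₗ e.toLinearMap ∘ₗ W.projectionOnto H hH.symm
  have hker : LinearMap.ker N = H := by
    rw [LinearMap.ker_comp_of_ker_eq_bot _ U.ker_subtype, LinearMap.ker_comp_of_ker_eq_bot _ e.ker,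
      Submodule.ker_projectionOnto]
  have hrange : LinearMap.range N ≤ U := by
    rintro _ ⟨x, rfl⟩
    exact Subtype.coe_prop _
  refine ⟨N, ?_, hrange, hker ▸ hH.symm.disjoint⟩
  rw [sq, End.mul_eq_comp, ← LinearMap.range_le_ker_iff, hker]
  exact hrange.trans hUH

theorem isUnit_add_of_disjoint {f g : End K V}
    (hrange : Disjoint (LinearMap.range f) (LinearMap.range g))
    (hker : Disjoint (LinearMap.ker f) (LinearMap.ker g)) : IsUnit (f + g) := by
  rw [LinearMap.isUnit_iff_ker_eq_bot, LinearMap.ker_eq_bot']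
  intro x hx
  have hfg : f x = g (-x) := by
    rw [map_neg]
    exact eq_neg_of_add_eq_zero_left hx
  have hf : f x = 0 := Submodule.disjoint_def.1 hrange _ ⟨x, rfl⟩ (hfg ▸ ⟨-x, rfl⟩)
  have hg : g x = 0 := by simpa [hf] using hx
  exact Submodule.disjoint_def.1 hker x hf hg

theorem exists_isUnit_add_sq_eq_zero_of_finrank_le (f : End K V)
    (h : finrank K V ≤ 2 * finrank K (LinearMap.range f)) :
    ∃ T N : End K V, IsUnit T ∧ N ^ 2 = 0 ∧ f = T + N := by
  have hf := LinearMap.finrank_range_add_finrank_ker f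
  obtain ⟨U, hU, hUker, hUrange⟩ := exists_finrank_eq_disjoint_disjoint
    (d := finrank K (LinearMap.ker f)) (P := LinearMap.ker f) (Q := LinearMap.range f)
    (by omega) (by omega)
  obtain ⟨N, hN, hNU, hker⟩ := exists_sq_eq_zero_disjoint_ker hUker hU.symm
  exact ⟨f + N, -N, isUnit_add_of_disjoint (hUrange.symm.mono_right hNU) hker,
    by rw [neg_sq, hN], (add_neg_cancel_right f N).symm⟩

end UnitAddSqEqZero

theorem exists_isUnit_add_sq_eq_zero_of_card_le {K ι : Type*} [Field K] [Fintype ι]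
    [DecidableEq ι] (A : Matrix ι ι K) (h : Fintype.card ι ≤ 2 * A.rank) :
    ∃ T N : Matrix ι ι K, IsUnit T ∧ N ^ 2 = 0 ∧ A = T + N := by
  obtain ⟨T, N, hT, hN, hA⟩ := exists_isUnit_add_sq_eq_zero_of_finrank_le (Matrix.toLinAlgEquiv' A)
    (by rw [finrank_fintype_fun_eq_card]; exact h)
  refine ⟨Matrix.toLinAlgEquiv'.symm T, Matrix.toLinAlgEquiv'.symm N, hT.map _,
    by rw [← map_pow, hN, map_zero], ?_⟩
  rw [← map_add, ← hA, AlgEquiv.symm_apply_apply]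

theorem rank_map_algebraMap {m n K L : Type*} [Finite m] [Fintype n] [Field K] [Field L]
    [Algebra K L] (A : Matrix m n K) : (A.map (algebraMap K L)).rank = A.rank := by
  obtain ⟨κ, c, hc, hspan, hli⟩ := exists_linearIndependent' K A.col
  have := Fintype.ofInjective c hc
  let ψ : (m → K) →ₗ[K] (m → L) := (Algebra.linearMap K L).compLeft m
  have hliL : LinearIndependent L fun j => ψ (A.col (c j)) :=
    linearIndependent_algebraMap_comp_iff.2 hli
  have hspanL : Submodule.span L (Set.range fun j => ψ (A.col (c j))) =
      Submodule.span L (Set.range (A.map (algebraMap K L)).col) := by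
    refine le_antisymm (Submodule.span_mono ?_) (Submodule.span_le.2 ?_)
    · rintro _ ⟨j, rfl⟩
      exact ⟨c j, rfl⟩
    · rintro _ ⟨j, rfl⟩
      have hj : A.col j ∈ Submodule.span K (Set.range (A.col ∘ c)) :=
        hspan ▸ Submodule.subset_span (Set.mem_range_self j)
      have hψj := Submodule.mem_map_of_mem (f := ψ) hj
      rw [Submodule.map_span, ← Set.range_comp] at hψj
      exact Submodule.span_le_restrictScalars K L _ hψj
  rw [Matrix.rank_eq_finrank_span_cols, Matrix.rank_eq_finrank_span_cols, ← hspanL, ← hspan,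
    finrank_span_eq_card hli, finrank_span_eq_card hliL]

section CompanionMatrix

variable {R F S : Type*} [CommRing R] [Field F] [Ring S] [Algebra R F] [Algebra F S]
  [Algebra R S] [IsScalarTower R F S]

theorem isIntegral_coeff_minpoly {x : S} (hx : IsIntegral R x) (i : ℕ) :
    IsIntegral R ((minpoly F x).coeff i) := by
  obtain ⟨f, hf, hfx⟩ := hx
  have hdvd : minpoly F x ∣ f.map (algebraMap R F) :=
    minpoly.dvd F x (by rwa [aeval_map_algebraMap])
  exact isIntegral_coeff_of_dvd f _ hf (minpoly.monic (.tower_top ⟨f, hf, hfx⟩)) hdvd i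

theorem isIntegral_leftMulMatrix_powerBasis (pb : PowerBasis F S)
    (h : IsIntegral R pb.gen) (i j : Fin pb.dim) :
    IsIntegral R (Algebra.leftMulMatrix pb.basis pb.gen i j) := by
  rw [pb.leftMulMatrix, Matrix.of_apply, pb.minpolyGen_eq]
  split_ifs
  exacts [(isIntegral_coeff_minpoly h i).neg, isIntegral_one, isIntegral_zero]

end CompanionMatrix

theorem leftMulMatrix_piBasis {R η : Type*} {κ S : η → Type*} [CommRing R] [∀ i, Ring (S i)]
    [∀ i, Algebra R (S i)] [Fintype η] [DecidableEq η] [∀ i, Fintype (κ i)]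
    [∀ i, DecidableEq (κ i)] (b : ∀ i, Basis (κ i) R (S i)) (x : ∀ i, S i) :
    Algebra.leftMulMatrix (Pi.basis b) x =
      Matrix.blockDiagonal' fun i => Algebra.leftMulMatrix (b i) (x i) := by
  ext ⟨i, s⟩ ⟨j, t⟩
  rw [Algebra.leftMulMatrix_eq_repr_mul, Pi.basis_repr, Pi.basis_apply, Pi.mul_apply]
  rcases eq_or_ne i j with rfl | hij
  · rw [Matrix.blockDiagonal'_apply_eq, Pi.single_eq_same, Algebra.leftMulMatrix_eq_repr_mul]
  · rw [Matrix.blockDiagonal'_apply_ne _ _ _ hij, Pi.single_eq_of_ne hij, mul_zero, map_zero,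
      Finsupp.zero_apply]

theorem toMatrix_map_symm_eq_leftMulMatrix {F V B κ : Type*} [CommRing F] [AddCommGroup V]
    [Module F V] [Ring B] [Algebra F B] [Fintype κ] [DecidableEq κ] (b : Basis κ F B)
    (E : V ≃ₗ[F] B) {φ : End F V} {x : B} (h : ∀ v, E (φ v) = x * E v) :
    LinearMap.toMatrix (b.map E.symm) (b.map E.symm) φ = Algebra.leftMulMatrix b x := by
  ext i j
  rw [LinearMap.toMatrix_apply, Algebra.leftMulMatrix_eq_repr_mul, Basis.map_repr, Basis.map_apply,
    LinearEquiv.trans_apply, E.symm_symm, h, E.apply_symm_apply]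

theorem isIntegral_of_linearEquiv_apply_eq_mul {R F V B : Type*} [CommRing R] [CommRing F]
    [Algebra R F] [AddCommGroup V] [Module F V] [Module R V] [IsScalarTower R F V]
    [Ring B] [Algebra F B] [Algebra R B] [IsScalarTower R F B] (E : V ≃ₗ[F] B)
    {φ : End F V} {x : B} (h : ∀ v, E (φ v) = x * E v) (hφ : IsIntegral R φ) :
    IsIntegral R x := by
  have hconj : E.conjAlgEquiv R φ = Algebra.lmul F B x := by
    ext y
    rw [LinearEquiv.conjAlgEquiv_apply_apply, h, E.apply_symm_apply]
    rfl
  have hlmul := hφ.map (E.conjAlgEquiv R)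
  rw [hconj] at hlmul
  exact (isIntegral_algHom_iff ((Algebra.lmul F B).restrictScalars R)
    Algebra.lmul_injective).1 hlmul

theorem exists_linearEquiv_pi_adjoinRoot.{u, v} {F : Type u} {V : Type v} [Field F]
    [AddCommGroup V] [Module F V] [FiniteDimensional F V] (φ : End F V) :
    ∃ (η : Type u) (_ : Fintype η) (g : η → F[X]) (_ : ∀ i, g i ≠ 0)
      (E : V ≃ₗ[F] ∀ i, AdjoinRoot (g i)),
      ∀ v, E (φ v) = (fun i => AdjoinRoot.root (g i)) * E v := by
  obtain ⟨η, hη, q, hq, e, ⟨h⟩⟩ :=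
    Module.equiv_directSum_of_isTorsion (AEval.isTorsion_of_finiteDimensional F V φ)
  let E : V ≃ₗ[F] ∀ i, AdjoinRoot (q i ^ e i) :=
    AEval'.of φ ≪≫ₗ h.restrictScalars F ≪≫ₗ
      DirectSum.linearEquivFunOnFintype F η fun i => AdjoinRoot (q i ^ e i)
  refine ⟨η, hη, fun i => q i ^ e i, fun i => pow_ne_zero _ (hq i).ne_zero, E, fun v => ?_⟩
  have hX : h (AEval'.of φ (φ v)) = (X : F[X]) • h (AEval'.of φ v) := by
    rw [← AEval'.X_smul_of, map_smul]
  -- `AdjoinRoot` is a quotient by `Ideal.span`, only definitionally equal to the summand here.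
  have hroot (i : η) (y : F[X] ⧸ F[X] ∙ q i ^ e i) : (X : F[X]) • y =
      (AdjoinRoot.root (q i ^ e i) * (show AdjoinRoot (q i ^ e i) from y) :
        AdjoinRoot (q i ^ e i)) := by
    obtain ⟨z, rfl⟩ := Submodule.Quotient.mk_surjective _ y
    exact map_mul (AdjoinRoot.mk (q i ^ e i)) X z
  ext i
  exact (congrArg (· i) hX).trans (hroot i _)

section Similarity

variable {R F ι : Type*} [CommRing R] [Field F] [Algebra R F] [Fintype ι] [DecidableEq ι]

theorem exists_basis_isIntegral_toMatrix {V : Type*} [AddCommGroup V] [Module F V]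
    [Module R V] [IsScalarTower R F V] [FiniteDimensional F V] {φ : End F V}
    (hφ : IsIntegral R φ) (hι : Fintype.card ι = finrank F V) :
    ∃ b : Basis ι F V, ∀ i j, IsIntegral R (LinearMap.toMatrix b b φ i j) := by
  classical
  obtain ⟨η, _, g, hg, E, hE⟩ := exists_linearEquiv_pi_adjoinRoot φ
  let pb (i : η) : PowerBasis F (AdjoinRoot (g i)) := AdjoinRoot.powerBasis (hg i)
  let b : Basis (Σ i, Fin (pb i).dim) F V := (Pi.basis fun i => (pb i).basis).map E.symm
  have hroot (i : η) : IsIntegral R (pb i).gen :=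
    (isIntegral_of_linearEquiv_apply_eq_mul E hE hφ).map
      (Pi.evalAlgHom R (fun i => AdjoinRoot (g i)) i)
  have hmat : LinearMap.toMatrix b b φ =
      Matrix.blockDiagonal' fun i => Algebra.leftMulMatrix (pb i).basis (pb i).gen :=
    (toMatrix_map_symm_eq_leftMulMatrix _ E hE).trans (leftMulMatrix_piBasis _ _)
  have hb : ∀ s t, IsIntegral R (LinearMap.toMatrix b b φ s t) := by
    rintro ⟨i, s⟩ ⟨j, t⟩
    rw [hmat, Matrix.blockDiagonal'_apply]
    split_ifs
    exacts [isIntegral_leftMulMatrix_powerBasis _ (hroot i) _ _, isIntegral_zero]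
  let e : (Σ i, Fin (pb i).dim) ≃ ι :=
    Fintype.equivOfCardEq (by rw [hι, finrank_eq_card_basis b])
  refine ⟨b.reindex e, fun i j => ?_⟩
  simpa [LinearMap.toMatrix_apply] using hb (e.symm i) (e.symm j)

theorem exists_units_conj_isIntegral {A : Matrix ι ι F} (hA : IsIntegral R A) :
    ∃ (P : (Matrix ι ι F)ˣ) (B : Matrix ι ι F),
      (∀ i j, IsIntegral R (B i j)) ∧ A = P.val * B * P⁻¹.val := by
  have hφ : IsIntegral R (Matrix.toLin' A) :=
    hA.map ((Matrix.toLinAlgEquiv' (R := F) (n := ι)).toAlgHom.restrictScalars R)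
  obtain ⟨b, hb⟩ := exists_basis_isIntegral_toMatrix hφ (finrank_fintype_fun_eq_card F).symm
  let c := Pi.basisFun F ι
  refine ⟨⟨c.toMatrix b, b.toMatrix c, c.toMatrix_mul_toMatrix_flip b,
    b.toMatrix_mul_toMatrix_flip c⟩, LinearMap.toMatrix b b (Matrix.toLin' A), hb, ?_⟩
  rw [Units.inv_mk, basis_toMatrix_mul_linearMap_toMatrix_mul_basis_toMatrix c b c b,
    LinearMap.toMatrix_eq_toMatrix', LinearMap.toMatrix'_toLin']

end Similarity

section Decomposition

variable {k F ι : Type*} [Field k] [Field F] [Algebra k F] [Fintype ι] [DecidableEq ι]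

theorem exists_isUnit_isIntegral_add_sq_eq_zero {A : Matrix ι ι F} (hA : IsIntegral k A)
    (h : Fintype.card ι ≤ 2 * A.rank) :
    ∃ T N : Matrix ι ι F, IsUnit T ∧ IsIntegral k T ∧ N ^ 2 = 0 ∧ A = T + N := by
  obtain ⟨P, B, hB, rfl⟩ := exists_units_conj_isIntegral hA
  let K := algebraicClosure k F
  let B₀ : Matrix ι ι K := Matrix.of fun i j => ⟨B i j, mem_algebraicClosure_iff'.2 (hB i j)⟩
  have hrank : (P.val * B * P⁻¹.val).rank = B₀.rank := by
    rw [Matrix.rank_mul_eq_left_of_isUnit_det _ _ ((Matrix.isUnit_iff_isUnit_det _).1 P⁻¹.isUnit),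
      Matrix.rank_mul_eq_right_of_isUnit_det _ _ ((Matrix.isUnit_iff_isUnit_det _).1 P.isUnit)]
    exact rank_map_algebraMap (L := F) B₀
  obtain ⟨T, N, hT, hN, hTN⟩ := exists_isUnit_add_sq_eq_zero_of_card_le B₀ (hrank ▸ h)
  have hTk : IsIntegral k T := isIntegral_trans (A := K) T (Matrix.isIntegral T)
  let Φ : Matrix ι ι K →ₐ[k] Matrix ι ι F :=
    (MulSemiringAction.toAlgHom k (Matrix ι ι F) (ConjAct.toConjAct P)).comp K.val.mapMatrix
  have hΦ : P.val * B * P⁻¹.val = Φ B₀ := rfl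
  exact ⟨Φ T, Φ N, hT.map Φ, hTk.map Φ, by rw [← map_pow, hN, map_zero], by rw [hΦ, hTN, map_add]⟩

theorem periodic_eq_torsion_add_squareZero_charP_general [Finite k] {A : Matrix ι ι F}
    (hA : IsIntegral k A) (hrank : Fintype.card ι ≤ 2 * A.rank) :
    ∃ T N : Matrix ι ι F,
      IsUnit T ∧ (∃ s : ℕ, 1 ≤ s ∧ T ^ s = 1) ∧ N ^ 2 = 0 ∧ A = T + N := by
  obtain ⟨T, N, hT, hTk, hN, hTN⟩ := exists_isUnit_isIntegral_add_sq_eq_zero hA hrank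
  have hfin : IsOfFinOrder T := isOfFinOrder_of_finite_powers hT (finite_powers_of_isIntegral hTk)
  exact ⟨T, N, hT, isOfFinOrder_iff_pow_eq_one.1 hfin, hN, hTN⟩

end Decomposition

/-- Over a field of prime characteristic, every periodic matrix of rank at
least `n/2` is the sum of a torsion matrix and a square-zero matrix. -/
theorem periodic_eq_torsion_add_squareZero_charP
    {F : Type*} [Field F] {p : ℕ} [hp : Fact p.Prime] [CharP F p] {n : ℕ}
    (A : Matrix (Fin n) (Fin n) F)
    (hA : ∃ m k : ℕ, 1 ≤ k ∧ k < m ∧ A ^ m = A ^ k)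
    (hrank : n ≤ 2 * A.rank) :
    ∃ T N : Matrix (Fin n) (Fin n) F,
      IsUnit T ∧ (∃ s : ℕ, 1 ≤ s ∧ T ^ s = 1) ∧ N ^ 2 = 0 ∧
      A = T + N := by
  obtain ⟨m, k, -, hkm, hpow⟩ := hA
  let : Algebra (ZMod p) F := ZMod.algebra F p
  exact periodic_eq_torsion_add_squareZero_charP_general (k := ZMod p)
    (isIntegral_of_pow_eq_pow hkm hpow) (by rwa [Fintype.card_fin])
end
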